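/- (Theorem 3.4) Let n ≥ 2 and α ≥ 0. The trace order of the family F_α satisfies ord F_α ≤ (1/2)(n+1)·( (1/2)·√(n+1)·α + √(1 + (1/4)(n+1)α² + C(n,α)) ), where C(n,α) = (4n² + 2n − 2 + (n+1)/(n−1))·α² + (4√(n+1) + 8√(n+1)/(n−1))·α. -/

import Mathlib

open scoped BigOperators

noncomputable section

/-- Partial derivative `∂f/∂z_i` of a scalar-valued holomorphic function on `ℂⁿ`. -/
def pd (n : ℕ) (i : Fin n) (f : (Fin n → ℂ) → ℂ) (z : Fin n → ℂ) : ℂ :=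
  fderiv ℂ f z (Pi.single i 1)

/-- Second partial derivative `∂²f/∂z_i∂z_j`. -/
def pd2 (n : ℕ) (i j : Fin n) (f : (Fin n → ℂ) → ℂ) (z : Fin n → ℂ) : ℂ :=
  pd n i (fun w => pd n j f w) z

/-- Complex Jacobian matrix `DF`. -/
def Jac (n : ℕ) (F : (Fin n → ℂ) → (Fin n → ℂ)) (z : Fin n → ℂ) :
    Matrix (Fin n) (Fin n) ℂ :=
  Matrix.of fun i j => pd n j (fun w => F w i) z

/-- Jacobian determinant `JF = det DF`. -/
def JDet (n : ℕ) (F : (Fin n → ℂ) → (Fin n → ℂ)) (z : Fin n → ℂ) : ℂ :=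
  (Jac n F z).det

/-- Oda's Schwarzian derivative `S^k_{ij}F`; the derivative of `log JF` is expressed
by the logarithmic derivative `(∂JF/∂z)/JF`, which is the derivative of any local
branch of the logarithm. -/
def oSchw (n : ℕ) (F : (Fin n → ℂ) → (Fin n → ℂ)) (i j k : Fin n) (z : Fin n → ℂ) : ℂ :=
  (∑ l, pd2 n i j (fun w => F w l) z * (Jac n F z)⁻¹ k l)
    - (1 / ((n : ℂ) + 1)) *
        ((if k = i then 1 else 0) * (pd n j (JDet n F) z / JDet n F z)
          + (if k = j then 1 else 0) * (pd n i (JDet n F) z / JDet n F z))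

/-- `S⁰_{ij}F`, defined through a local branch `u₀` of `(JF)^{-1/(n+1)}`. -/
def oS0 (n : ℕ) (F : (Fin n → ℂ) → (Fin n → ℂ)) (u₀ : (Fin n → ℂ) → ℂ)
    (i j : Fin n) (z : Fin n → ℂ) : ℂ :=
  (u₀ z)⁻¹ * (pd2 n i j u₀ z - ∑ k, oSchw n F i j k z * pd n k u₀ z)

/-- Euclidean norm on `ℂⁿ`. -/
def euclNorm (n : ℕ) (v : Fin n → ℂ) : ℝ := Real.sqrt (∑ i, ‖v i‖ ^ 2)

/-- Euclidean open unit ball `Bⁿ ⊆ ℂⁿ`. -/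
def eball (n : ℕ) : Set (Fin n → ℂ) := {z | euclNorm n z < 1}

/-- A biholomorphic automorphism of the unit ball: a holomorphic bijection of `Bⁿ`
onto itself with holomorphic inverse. -/
def IsAutB (n : ℕ) (σ : (Fin n → ℂ) → (Fin n → ℂ)) : Prop :=
  DifferentiableOn ℂ σ (eball n) ∧ Set.BijOn σ (eball n) (eball n) ∧
    ∃ τ : (Fin n → ℂ) → (Fin n → ℂ), DifferentiableOn ℂ τ (eball n) ∧
      (∀ z ∈ eball n, τ (σ z) = z) ∧ (∀ w ∈ eball n, σ (τ w) = w)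

/-- The automorphism of `Bⁿ` with `σ(0) = (ζ₁,0,…,0)` used in Lemma 3.2. -/
def sigmaA (n : ℕ) [NeZero n] (ζ : ℂ) (z : Fin n → ℂ) : Fin n → ℂ := fun i =>
  if i = 0 then (z 0 + ζ) / (1 + (starRingEnd ℂ) ζ * z 0)
  else ((Real.sqrt (1 - ‖ζ‖ ^ 2) : ℂ) * z i) / (1 + (starRingEnd ℂ) ζ * z 0)

/-- The Koebe transform `G(z) = Dσ(0)⁻¹ DF₀(σ(0))⁻¹ (F₀(σ(z)) − F₀(σ(0)))`. -/
def Koebe (n : ℕ) (F₀ σ : (Fin n → ℂ) → (Fin n → ℂ)) (z : Fin n → ℂ) : Fin n → ℂ :=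
  Matrix.mulVec ((Jac n σ 0)⁻¹ * (Jac n F₀ (σ 0))⁻¹) (F₀ (σ z) - F₀ (σ 0))

/-- The conjugation `G(z) = U⁻¹·F₀(U·z)` of `F₀` by a unitary matrix `U`. -/
def unitKoebe (n : ℕ) (F₀ : (Fin n → ℂ) → (Fin n → ℂ)) (U : Matrix (Fin n) (Fin n) ℂ)
    (z : Fin n → ℂ) : Fin n → ℂ :=
  Matrix.mulVec U⁻¹ (F₀ (Matrix.mulVec U z))

/-- The Schwarzian derivative operator `SF(z)(v) = (vᵗ𝕊¹F(z)v, …, vᵗ𝕊ⁿF(z)v)`. -/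
def SchwOp (n : ℕ) (F : (Fin n → ℂ) → (Fin n → ℂ)) (z v : Fin n → ℂ) : Fin n → ℂ :=
  fun k => ∑ i, ∑ j, v i * oSchw n F i j k z * v j

/-- The squared Bergman norm `‖v‖_z² = Σ_{i,j} g_{ij}(z) v_i conj(v_j)` on `Bⁿ`. -/
def bergSq (n : ℕ) (z v : Fin n → ℂ) : ℝ :=
  (∑ i, ∑ j, (((n : ℂ) + 1) / (((1 - (euclNorm n z) ^ 2 : ℝ) : ℂ)) ^ 2) *
      ((if i = j then ((1 - (euclNorm n z) ^ 2 : ℝ) : ℂ) else 0)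
        + (starRingEnd ℂ) (z i) * z j) * v i * (starRingEnd ℂ) (v j)).re

/-- Membership in the linearly invariant family `F_α`. -/
def memF (n : ℕ) (α : ℝ) (F : (Fin n → ℂ) → (Fin n → ℂ)) : Prop :=
  DifferentiableOn ℂ F (eball n) ∧ (∀ z ∈ eball n, JDet n F z ≠ 0) ∧
    F 0 = 0 ∧ Jac n F 0 = 1 ∧
    ∀ z ∈ eball n, ∀ v : Fin n → ℂ, bergSq n z v = 1 →
      Real.sqrt (bergSq n z (SchwOp n F z v)) ≤ α

noncomputable section

/-- Cauchy estimate for the Frechet derivative. -/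
theorem norm_fderiv_le_cauchy {E : Type*} [NormedAddCommGroup E] [NormedSpace ℂ E]
    {f : E → ℂ} {x : E} {ρ M : ℝ} (hρ : 0 < ρ)
    (hd : ∀ y ∈ Metric.closedBall x ρ, DifferentiableAt ℂ f y)
    (hM : ∀ y ∈ Metric.closedBall x ρ, ‖f y‖ ≤ M) : ‖fderiv ℂ f x‖ ≤ M / ρ := by
  have hM0 : 0 ≤ M := (norm_nonneg _).trans (hM x (Metric.mem_closedBall_self hρ.le))
  refine ContinuousLinearMap.opNorm_le_bound _ (by positivity) fun v => ?_
  by_cases hv : v = 0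
  · simp [hv]
  have hv' : 0 < ‖v‖ := norm_pos_iff.mpr hv
  have hmem : ∀ t : ℂ, ‖t‖ ≤ ρ / ‖v‖ → x + t • v ∈ Metric.closedBall x ρ := by
    intro t ht
    rw [mem_closedBall_iff_norm, add_sub_cancel_left, norm_smul]
    exact (le_div_iff₀ hv').mp ht
  have hline : ∀ t : ℂ, HasDerivAt (fun t : ℂ => x + t • v) v t := by
    intro t
    simpa using ((hasDerivAt_id t).smul_const v).const_add x
  have hder : ∀ t : ℂ, ‖t‖ ≤ ρ / ‖v‖ →
      HasDerivAt (fun t : ℂ => f (x + t • v)) (fderiv ℂ f (x + t • v) v) t := by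
    intro t ht
    exact (hd _ (hmem t ht)).hasFDerivAt.comp_hasDerivAt t (hline t)
  have h0 := (hder 0 (by simp; positivity)).deriv
  simp only [zero_smul, add_zero] at h0
  rw [← h0]
  have := Complex.norm_deriv_le_of_forall_mem_sphere_norm_le (c := 0) (R := ρ / ‖v‖) (C := M)
    (f := fun t : ℂ => f (x + t • v)) (by positivity)
    (DifferentiableOn.diffContOnCl (fun t ht => by
      have ht' : t ∈ Metric.closedBall (0:ℂ) (ρ / ‖v‖) := Metric.closure_ball_subset_closedBall ht
      exact (hder t (by simpa using ht')).differentiableAt.differentiableWithinAt))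
    (fun t ht => hM _ (hmem t (by simpa using (mem_sphere_zero_iff_norm.mp ht).le)))
  calc _ ≤ M / (ρ / ‖v‖) := this
    _ = M / ρ * ‖v‖ := by field_simp

/-- Directional derivatives of holomorphic functions of several variables are holomorphic. -/
theorem differentiableAt_fderiv_apply {n : ℕ} {f : (Fin n → ℂ) → ℂ} {U : Set (Fin n → ℂ)}
    (hU : IsOpen U) (hf : DifferentiableOn ℂ f U) (v : Fin n → ℂ) {x₀ : Fin n → ℂ} (hx : x₀ ∈ U) :
    DifferentiableAt ℂ (fun z => fderiv ℂ f z v) x₀ := by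
  obtain ⟨ρ, hρ, M, hsub, hM⟩ : ∃ ρ > 0, ∃ M : ℝ, Metric.closedBall x₀ (3 * ρ) ⊆ U ∧
      ∀ y ∈ Metric.closedBall x₀ (3 * ρ), ‖f y‖ ≤ M := by
    obtain ⟨ε, hε, h1⟩ := Metric.nhds_basis_closedBall.mem_iff.mp (hU.mem_nhds hx)
    obtain ⟨M, hM⟩ := (isCompact_closedBall x₀ ε).exists_bound_of_continuousOn
      (hf.continuousOn.mono h1)
    refine ⟨ε / 3, by positivity, M, ?_, ?_⟩
    · rwa [mul_div_cancel₀ _ (by norm_num : (3:ℝ) ≠ 0)]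
    · rwa [mul_div_cancel₀ _ (by norm_num : (3:ℝ) ≠ 0)]
  have hd : ∀ y ∈ Metric.closedBall x₀ (3 * ρ), DifferentiableAt ℂ f y := fun y hy =>
    hf.differentiableAt (hU.mem_nhds (hsub hy))
  obtain ⟨r, hr, hrv⟩ : ∃ r > 0, r * ‖v‖ ≤ ρ := by
    refine ⟨ρ / (‖v‖ + 1), by positivity, ?_⟩
    rw [div_mul_eq_mul_div, div_le_iff₀ (by positivity)]
    nlinarith [norm_nonneg v]
  have hmem : ∀ x ∈ Metric.ball x₀ ρ, ∀ t : ℂ, ‖t‖ ≤ r →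
      Metric.closedBall (x + t • v) ρ ⊆ Metric.closedBall x₀ (3 * ρ) := by
    intro x hx t ht
    apply Metric.closedBall_subset_closedBall'
    have h1 : dist (x + t • v) x₀ ≤ ‖t • v‖ + dist x x₀ := by
      rw [dist_eq_norm, dist_eq_norm]
      calc _ = ‖t • v + (x - x₀)‖ := by congr 1; abel
        _ ≤ _ := norm_add_le _ _
    have h2 : ‖t • v‖ ≤ ρ := by
      rw [norm_smul]; exact (mul_le_mul_of_nonneg_right ht (norm_nonneg v)).trans hrv
    have h3 := Metric.mem_ball.mp hx
    linarith
  have hmem' : ∀ x ∈ Metric.ball x₀ ρ, ∀ t : ℂ, ‖t‖ ≤ r →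
      x + t • v ∈ Metric.closedBall x₀ (3 * ρ) := fun x hx t ht =>
    hmem x hx t ht (Metric.mem_closedBall_self hρ.le)
  have hline : ∀ x, ∀ t : ℂ, HasDerivAt (fun t : ℂ => x + t • v) v t := by
    intro x t
    simpa using ((hasDerivAt_id t).smul_const v).const_add x
  -- Cauchy formula
  have key : ∀ x ∈ Metric.ball x₀ ρ, fderiv ℂ f x v =
      (2 * Real.pi * Complex.I : ℂ)⁻¹ • ∫ θ in (0:ℝ)..2 * Real.pi,
        (deriv (circleMap 0 r) θ * ((circleMap 0 r θ) ^ 2)⁻¹) * f (x + circleMap 0 r θ • v) := by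
    intro x hx
    have hder : ∀ t : ℂ, x + t • v ∈ U →
        HasDerivAt (fun t : ℂ => f (x + t • v)) (fderiv ℂ f (x + t • v) v) t := by
      intro t ht
      exact (hf.differentiableAt (hU.mem_nhds ht)).hasFDerivAt.comp_hasDerivAt t (hline x t)
    have h0 := (hder 0 (hsub (hmem' x hx 0 (by simpa using hr.le)))).deriv
    simp only [zero_smul, add_zero] at h0
    have hopen : IsOpen {t : ℂ | x + t • v ∈ U} := hU.preimage (by fun_prop)
    have := Complex.cderiv_eq_deriv (r := r) (z := 0) (f := fun t : ℂ => f (x + t • v)) hopen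
      (fun t ht => (hder t ht).differentiableAt.differentiableWithinAt) hr
      (fun t ht => hsub (hmem' x hx t (by simpa using ht)))
    rw [← h0, ← this]
    simp only [Complex.cderiv, circleIntegral, smul_eq_mul, sub_zero, mul_assoc]
  have hcirc : ∀ θ : ℝ, ‖circleMap 0 r θ‖ ≤ r := by
    intro θ; simp [abs_of_pos hr]
  have hcont : ∀ x ∈ Metric.ball x₀ ρ, Continuous (fun θ : ℝ =>
      (deriv (circleMap 0 r) θ * ((circleMap 0 r θ) ^ 2)⁻¹) * f (x + circleMap 0 r θ • v)) := by
    intro x hx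
    have h1 : Continuous (circleMap 0 r) := continuous_circleMap 0 r
    have h2 : ∀ θ, circleMap 0 r θ ≠ 0 := fun θ => circleMap_ne_center hr.ne'
    simp only [deriv_circleMap]
    refine (by fun_prop (disch := intro θ; exact pow_ne_zero _ (h2 θ)) : Continuous _).mul ?_
    rw [continuous_iff_continuousAt]
    intro θ
    have : ContinuousAt f (x + circleMap 0 r θ • v) := (hd _ (hmem' x hx _ (hcirc θ))).continuousAt
    exact ContinuousAt.comp (f := fun θ : ℝ => x + circleMap 0 r θ • v) (x := θ) this
      (by fun_prop)
  have hmain := intervalIntegral.hasFDerivAt_integral_of_dominated_of_fderiv_le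
    (𝕜 := ℂ) (μ := MeasureTheory.volume) (a := 0) (b := 2 * Real.pi)
    (F := fun x θ => (deriv (circleMap 0 r) θ * ((circleMap 0 r θ) ^ 2)⁻¹) *
      f (x + circleMap 0 r θ • v))
    (F' := fun x θ => (deriv (circleMap 0 r) θ * ((circleMap 0 r θ) ^ 2)⁻¹) •
      fderiv ℂ f (x + circleMap 0 r θ • v))
    (bound := fun _ => (r * (r ^ 2)⁻¹) * (M / ρ))
    (x₀ := x₀) (s := Metric.ball x₀ ρ) (Metric.ball_mem_nhds x₀ hρ)
    (by
      filter_upwards [Metric.ball_mem_nhds x₀ hρ] with x hx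
      exact (hcont x hx).aestronglyMeasurable)
    ((hcont x₀ (Metric.mem_ball_self hρ)).intervalIntegrable _ _)
    (by
      apply Measurable.aestronglyMeasurable
      have h1 : Continuous (circleMap 0 r) := continuous_circleMap 0 r
      simp only [deriv_circleMap]
      have h2 : Measurable fun θ : ℝ => circleMap 0 r θ * Complex.I * ((circleMap 0 r θ) ^ 2)⁻¹ :=
        (h1.measurable.mul_const _).mul (h1.measurable.pow_const 2).inv
      refine Measurable.smul h2 ?_
      exact (measurable_fderiv ℂ f).comp (by fun_prop))
    (by
      refine Filter.Eventually.of_forall fun θ _ x hx => ?_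
      have hb := norm_fderiv_le_cauchy hρ (fun y hy => hd y (hmem x hx _ (hcirc θ) hy))
        (fun y hy => hM y (hmem x hx _ (hcirc θ) hy))
      rw [norm_smul, norm_mul, norm_inv, norm_pow, deriv_circleMap]
      have e1 : ‖circleMap 0 r θ * Complex.I‖ = r := by simp [abs_of_pos hr]
      have e2 : ‖circleMap 0 r θ‖ = r := by simp [abs_of_pos hr]
      rw [e1, e2]
      gcongr)
    (by simp)
    (by
      refine Filter.Eventually.of_forall fun θ _ x hx => ?_
      have h := (hd _ (hmem' x hx _ (hcirc θ))).hasFDerivAt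
      have h2 : HasFDerivAt (fun x : Fin n → ℂ => x + circleMap 0 r θ • v)
        (ContinuousLinearMap.id ℂ _) x := (hasFDerivAt_id x).add_const _
      have h3 := h.comp x h2
      rw [ContinuousLinearMap.comp_id] at h3
      exact h3.const_mul _)
  have hmain2 := (hmain.const_smul ((2 * Real.pi * Complex.I : ℂ)⁻¹)).differentiableAt
  refine hmain2.congr_of_eventuallyEq ?_
  filter_upwards [Metric.ball_mem_nhds x₀ hρ] with x hx
  exact key x hx
end

noncomputable section

theorem isOpen_eball (n : ℕ) : IsOpen (eball n) := by
  have : Continuous (euclNorm n) := by unfold euclNorm; fun_prop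
  exact isOpen_lt this continuous_const

theorem pd_congr {n : ℕ} {U : Set (Fin n → ℂ)} (hU : IsOpen U) {f g : (Fin n → ℂ) → ℂ}
    (h : ∀ z ∈ U, f z = g z) (i : Fin n) {z : Fin n → ℂ} (hz : z ∈ U) :
    pd n i f z = pd n i g z := by
  unfold pd
  rw [Filter.EventuallyEq.fderiv_eq]
  filter_upwards [hU.mem_nhds hz] with w hw using h w hw

theorem pd_add {n : ℕ} {f g : (Fin n → ℂ) → ℂ} {z : Fin n → ℂ} (i : Fin n)
    (hf : DifferentiableAt ℂ f z) (hg : DifferentiableAt ℂ g z) :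
    pd n i (fun w => f w + g w) z = pd n i f z + pd n i g z := by
  unfold pd
  rw [fderiv_fun_add hf hg]; rfl

theorem pd_mul {n : ℕ} {f g : (Fin n → ℂ) → ℂ} {z : Fin n → ℂ} (i : Fin n)
    (hf : DifferentiableAt ℂ f z) (hg : DifferentiableAt ℂ g z) :
    pd n i (fun w => f w * g w) z = pd n i f z * g z + f z * pd n i g z := by
  unfold pd
  rw [fderiv_fun_mul hf hg]
  simp; ring

theorem pd_const_mul {n : ℕ} {g : (Fin n → ℂ) → ℂ} {z : Fin n → ℂ} (i : Fin n) (c : ℂ)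
    (hg : DifferentiableAt ℂ g z) :
    pd n i (fun w => c * g w) z = c * pd n i g z := by
  unfold pd
  rw [fderiv_const_mul hg]; simp

theorem pd_sum {n : ℕ} {ι : Type*} (s : Finset ι) {f : ι → (Fin n → ℂ) → ℂ} {z : Fin n → ℂ}
    (i : Fin n) (hf : ∀ l ∈ s, DifferentiableAt ℂ (f l) z) :
    pd n i (fun w => ∑ l ∈ s, f l w) z = ∑ l ∈ s, pd n i (f l) z := by
  unfold pd
  rw [fderiv_fun_sum hf]; simp

theorem pd_diffAt {n : ℕ} {f : (Fin n → ℂ) → ℂ} {U : Set (Fin n → ℂ)} (hU : IsOpen U)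
    (hf : DifferentiableOn ℂ f U) (i : Fin n) : DifferentiableOn ℂ (pd n i f) U := fun _ hz =>
  (differentiableAt_fderiv_apply hU hf (Pi.single i 1) hz).differentiableWithinAt

theorem pd2_symm {n : ℕ} {f : (Fin n → ℂ) → ℂ} {U : Set (Fin n → ℂ)} (hU : IsOpen U)
    (hf : DifferentiableOn ℂ f U) (i j : Fin n) {z : Fin n → ℂ} (hz : z ∈ U) :
    pd2 n i j f z = pd2 n j i f z := by
  have hd : DifferentiableAt ℂ (fderiv ℂ f) z := by
    let e : ((Fin n → ℂ) →L[ℂ] ℂ) →ₗ[ℂ] (Fin n → ℂ) :=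
      { toFun := fun L k => L (Pi.single k 1)
        map_add' := by intros; rfl
        map_smul' := by intros; rfl }
    have he : Function.Injective e := by
      intro L M h
      apply ContinuousLinearMap.coe_injective
      apply LinearMap.pi_ext'
      intro k
      apply LinearMap.ext_ring
      exact congrFun h k
    obtain ⟨g, hg⟩ := LinearMap.exists_leftInverse_of_injective e (LinearMap.ker_eq_bot.mpr he)
    have h1 : DifferentiableAt ℂ (fun w => e (fderiv ℂ f w)) z := by
      rw [differentiableAt_pi]
      intro k
      exact differentiableAt_fderiv_apply hU hf (Pi.single k 1) hz
    have h2 : fderiv ℂ f = fun w => LinearMap.toContinuousLinearMap g (e (fderiv ℂ f w)) := by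
      funext w
      have := LinearMap.congr_fun hg (fderiv ℂ f w)
      simpa using this.symm
    rw [h2]
    exact (LinearMap.toContinuousLinearMap g).differentiableAt.comp z h1
  have hsym := second_derivative_symmetric_of_eventually (𝕜 := ℂ) (f := f) (f' := fderiv ℂ f)
    (x := z) (f'' := fderiv ℂ (fderiv ℂ f) z)
    (by
      filter_upwards [hU.mem_nhds hz] with w hw
      exact (hf.differentiableAt (hU.mem_nhds hw)).hasFDerivAt) hd.hasFDerivAt
  have hexp : ∀ i j, pd2 n i j f z = fderiv ℂ (fderiv ℂ f) z (Pi.single i 1) (Pi.single j 1) := by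
    intro i j
    unfold pd2 pd
    rw [fderiv_clm_apply hd (differentiableAt_const _)]
    simp
  rw [hexp, hexp, hsym]

/-- The determinant as a continuous multilinear function of the rows. -/
def detCM (n : ℕ) : ContinuousMultilinearMap ℂ (fun _ : Fin n => Fin n → ℂ) ℂ where
  toMultilinearMap := (Matrix.detRowAlternating (R := ℂ) (n := Fin n)).toMultilinearMap
  cont := by
    change Continuous fun M : Matrix (Fin n) (Fin n) ℂ => M.det
    exact Continuous.matrix_det continuous_id

theorem detCM_apply (n : ℕ) (M : Matrix (Fin n) (Fin n) ℂ) : detCM n (fun i => M i) = M.det := rfl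

theorem det_hasFDerivAt {n : ℕ} {A : (Fin n → ℂ) → Matrix (Fin n) (Fin n) ℂ} {z : Fin n → ℂ}
    (hA : ∀ i j, DifferentiableAt ℂ (fun w => A w i j) z) :
    HasFDerivAt (fun w => (A w).det)
      (∑ i, ((detCM n).toContinuousLinearMap (fun j => A z j) i) ∘L
        (ContinuousLinearMap.pi fun j => fderiv ℂ (fun w => A w i j) z)) z := by
  have := HasFDerivAt.multilinear_comp (f := detCM n) (g := fun i w => A w i)
    (g' := fun i => ContinuousLinearMap.pi fun j => fderiv ℂ (fun w => A w i j) z) (x := z)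
    (fun i => hasFDerivAt_pi.mpr fun j => (hA i j).hasFDerivAt)
  exact this

theorem pd_det {n : ℕ} {A : (Fin n → ℂ) → Matrix (Fin n) (Fin n) ℂ} {z : Fin n → ℂ}
    (hA : ∀ i j, DifferentiableAt ℂ (fun w => A w i j) z) (a : Fin n) :
    pd n a (fun w => (A w).det) z =
      ∑ l, ∑ k, pd n a (fun w => A w l k) z * (A z).adjugate k l := by
  unfold pd
  rw [(det_hasFDerivAt hA).fderiv]
  rw [_root_.sum_apply]
  refine Finset.sum_congr rfl fun l _ => ?_
  rw [ContinuousLinearMap.comp_apply]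
  set r : Fin n → ℂ := (ContinuousLinearMap.pi fun j => fderiv ℂ (fun w => A w l j) z)
    (Pi.single a 1) with hr
  change ((A z).updateRow l r).det = _
  rw [Matrix.det_eq_sum_mul_adjugate_row _ l]
  refine Finset.sum_congr rfl fun k _ => ?_
  rw [Matrix.updateRow_self]
  congr 1
  rw [Matrix.adjugate_apply, Matrix.adjugate_apply, Matrix.updateRow_idem]

theorem det_diffAt {n : ℕ} {A : (Fin n → ℂ) → Matrix (Fin n) (Fin n) ℂ} {z : Fin n → ℂ}
    (hA : ∀ i j, DifferentiableAt ℂ (fun w => A w i j) z) :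
    DifferentiableAt ℂ (fun w => (A w).det) z := (det_hasFDerivAt hA).differentiableAt

theorem inv_diffAt {n : ℕ} {A : (Fin n → ℂ) → Matrix (Fin n) (Fin n) ℂ} {z : Fin n → ℂ}
    (hA : ∀ i j, DifferentiableAt ℂ (fun w => A w i j) z) (h0 : (A z).det ≠ 0) (k l : Fin n) :
    DifferentiableAt ℂ (fun w => (A w)⁻¹ k l) z := by
  have : (fun w => (A w)⁻¹ k l) =
      fun w => ((A w).det)⁻¹ * ((A w).updateRow l (Pi.single k 1)).det := by
    funext w
    rw [Matrix.inv_def, Matrix.smul_apply, Matrix.adjugate_apply, Ring.inverse_eq_inv', smul_eq_mul]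
  rw [this]
  refine ((det_diffAt hA).inv h0).mul (det_diffAt ?_)
  intro i j
  by_cases hi : i = l
  · subst hi
    simp only [Matrix.updateRow_self]
    exact differentiableAt_const _
  · simp only [Matrix.updateRow_ne hi]
    exact hA i j

/-- Christoffel symbols `Γ^k_{ij}` of the flat connection induced by `F`. -/
def Gam (n : ℕ) (F : (Fin n → ℂ) → (Fin n → ℂ)) (k i j : Fin n) (z : Fin n → ℂ) : ℂ :=
  ∑ l, pd2 n i j (fun w => F w l) z * (Jac n F z)⁻¹ k l

/-- Logarithmic derivative of `u₀ = (JF)^{-1/(n+1)}`. -/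
def om (n : ℕ) (F : (Fin n → ℂ) → (Fin n → ℂ)) (j : Fin n) (z : Fin n → ℂ) : ℂ :=
  -(1 / ((n : ℂ) + 1)) * ∑ k, Gam n F k k j z

section
theorem comp_diff {n : ℕ} {F : (Fin n → ℂ) → (Fin n → ℂ)} {U : Set (Fin n → ℂ)}
    (hU : IsOpen U) (hF : DifferentiableOn ℂ F U)
    (l : Fin n) : DifferentiableOn ℂ (fun w => F w l) U := by
  intro z hz
  exact (differentiableWithinAt_pi.mp (hF z hz)) l

theorem jac_diffAt {n : ℕ} {F : (Fin n → ℂ) → (Fin n → ℂ)} {U : Set (Fin n → ℂ)}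
    (hU : IsOpen U) (hF : DifferentiableOn ℂ F U)
    {z : Fin n → ℂ} (hz : z ∈ U) (i j : Fin n) :
    DifferentiableAt ℂ (fun w => Jac n F w i j) z :=
  (pd_diffAt hU (comp_diff hU hF i) j).differentiableAt (hU.mem_nhds hz)

theorem Gam_symm {n : ℕ} {F : (Fin n → ℂ) → (Fin n → ℂ)} {U : Set (Fin n → ℂ)}
    (hU : IsOpen U) (hF : DifferentiableOn ℂ F U)
    {z : Fin n → ℂ} (hz : z ∈ U) (k i j : Fin n) :
    Gam n F k i j z = Gam n F k j i z := by
  unfold Gam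
  refine Finset.sum_congr rfl fun l _ => ?_
  rw [pd2_symm hU (comp_diff hU hF l) i j hz]

theorem Gam_diffAt {n : ℕ} {F : (Fin n → ℂ) → (Fin n → ℂ)} {U : Set (Fin n → ℂ)}
    (hU : IsOpen U) (hF : DifferentiableOn ℂ F U)
    (hJ : ∀ z ∈ U, JDet n F z ≠ 0)
    {z : Fin n → ℂ} (hz : z ∈ U) (k i j : Fin n) :
    DifferentiableAt ℂ (Gam n F k i j) z := by
  unfold Gam
  refine DifferentiableAt.fun_sum fun l _ => ?_
  refine DifferentiableAt.mul ?_ (inv_diffAt (jac_diffAt hU hF hz) (hJ z hz) k l)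
  exact (pd_diffAt hU (pd_diffAt hU (comp_diff hU hF l) j) i).differentiableAt (hU.mem_nhds hz)

theorem om_diffAt {n : ℕ} {F : (Fin n → ℂ) → (Fin n → ℂ)} {U : Set (Fin n → ℂ)}
    (hU : IsOpen U) (hF : DifferentiableOn ℂ F U)
    (hJ : ∀ z ∈ U, JDet n F z ≠ 0)
    {z : Fin n → ℂ} (hz : z ∈ U) (j : Fin n) :
    DifferentiableAt ℂ (om n F j) z := by
  unfold om
  exact (DifferentiableAt.fun_sum fun k _ => Gam_diffAt hU hF hJ hz k k j).const_mul _

theorem pd2_eq_Gam {n : ℕ} {F : (Fin n → ℂ) → (Fin n → ℂ)} {U : Set (Fin n → ℂ)}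
    (hU : IsOpen U) (hF : DifferentiableOn ℂ F U)
    (hJ : ∀ z ∈ U, JDet n F z ≠ 0)
    {z : Fin n → ℂ} (hz : z ∈ U) (l i j : Fin n) :
    pd2 n i j (fun w => F w l) z = ∑ k, Jac n F z l k * Gam n F k i j z := by
  have h := Matrix.mul_nonsing_inv (Jac n F z) (Ne.isUnit (hJ z hz))
  unfold Gam
  have e : ∀ m, ∑ k, Jac n F z l k * (Jac n F z)⁻¹ k m = if l = m then 1 else 0 := by
    intro m
    have := congrFun (congrFun h l) m
    rw [Matrix.mul_apply, Matrix.one_apply] at this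
    exact this
  simp_rw [Finset.mul_sum]
  rw [Finset.sum_comm]
  simp_rw [mul_left_comm _ (pd2 _ _ _ _ _), ← Finset.mul_sum, e]
  simp

theorem log_pd {n : ℕ} {F : (Fin n → ℂ) → (Fin n → ℂ)} {U : Set (Fin n → ℂ)}
    (hU : IsOpen U) (hF : DifferentiableOn ℂ F U)
    (hJ : ∀ z ∈ U, JDet n F z ≠ 0)
    {z : Fin n → ℂ} (hz : z ∈ U) (a : Fin n) :
    pd n a (JDet n F) z / JDet n F z = ∑ k, Gam n F k k a z := by
  have h1 : pd n a (JDet n F) z = ∑ l, ∑ k, pd2 n a k (fun w => F w l) z *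
      (Jac n F z).adjugate k l := by
    have := pd_det (A := Jac n F) (jac_diffAt hU hF hz) a
    exact this
  rw [h1]
  simp_rw [Gam_symm hU hF hz _ _ a]
  unfold Gam
  rw [Finset.sum_div]
  simp_rw [Finset.sum_div]
  rw [Finset.sum_comm]
  refine Finset.sum_congr rfl fun k _ => Finset.sum_congr rfl fun l _ => ?_
  rw [Matrix.inv_def, Matrix.smul_apply, Ring.inverse_eq_inv', smul_eq_mul]
  change _ / (Jac n F z).det = _
  ring

theorem oSchw_eq {n : ℕ} {F : (Fin n → ℂ) → (Fin n → ℂ)} {U : Set (Fin n → ℂ)}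
    (hU : IsOpen U) (hF : DifferentiableOn ℂ F U)
    (hJ : ∀ z ∈ U, JDet n F z ≠ 0)
    {z : Fin n → ℂ} (hz : z ∈ U) (i j k : Fin n) :
    oSchw n F i j k z = Gam n F k i j z + ((if k = i then 1 else 0) * om n F j z
      + (if k = j then 1 else 0) * om n F i z) := by
  unfold oSchw
  rw [log_pd hU hF hJ hz, log_pd hU hF hJ hz]
  unfold om
  change Gam n F k i j z - _ = _
  ring

theorem flat {n : ℕ} {F : (Fin n → ℂ) → (Fin n → ℂ)} {U : Set (Fin n → ℂ)}
    (hU : IsOpen U) (hF : DifferentiableOn ℂ F U)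
    (hJ : ∀ z ∈ U, JDet n F z ≠ 0)
    {z : Fin n → ℂ} (hz : z ∈ U) (m a i j : Fin n) :
    pd n a (Gam n F m i j) z + ∑ k, Gam n F m a k z * Gam n F k i j z =
    pd n i (Gam n F m a j) z + ∑ k, Gam n F m i k z * Gam n F k a j z := by
  have hT : ∀ l a i, pd n a (pd2 n i j (fun w => F w l)) z =
      ∑ m, Jac n F z l m *
        (pd n a (Gam n F m i j) z + ∑ k, Gam n F m a k z * Gam n F k i j z) := by
    intro l a i
    rw [pd_congr hU (fun w hw => pd2_eq_Gam hU hF hJ hw l i j) a hz]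
    rw [pd_sum _ _ (fun k _ => (jac_diffAt hU hF hz l k).fun_mul (Gam_diffAt hU hF hJ hz k i j))]
    simp_rw [fun k => pd_mul a (jac_diffAt hU hF hz l k) (Gam_diffAt hU hF hJ hz k i j)]
    have hj : ∀ k, pd n a (fun w => Jac n F w l k) z = ∑ m, Jac n F z l m * Gam n F m a k z :=
      fun k => pd2_eq_Gam hU hF hJ hz l a k
    simp_rw [hj, mul_add, Finset.sum_add_distrib, Finset.sum_mul, Finset.mul_sum]
    rw [add_comm, Finset.sum_comm]
    simp_rw [mul_assoc]
  have hs : ∀ l, pd n a (pd2 n i j (fun w => F w l)) z =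
      pd n i (pd2 n a j (fun w => F w l)) z := fun l =>
    pd2_symm hU (pd_diffAt hU (comp_diff hU hF l) j) a i hz
  have hv : (Jac n F z).mulVec (fun m => pd n a (Gam n F m i j) z +
      ∑ k, Gam n F m a k z * Gam n F k i j z) =
      (Jac n F z).mulVec (fun m => pd n i (Gam n F m a j) z +
        ∑ k, Gam n F m i k z * Gam n F k a j z) := by
    funext l
    have := hs l
    rw [hT, hT] at this
    exact this
  have hinj : Function.Injective (Jac n F z).mulVec :=
    Matrix.mulVec_injective_iff_isUnit.mpr
      ((Matrix.isUnit_iff_isUnit_det _).mpr (Ne.isUnit (hJ z hz)))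
  exact congrFun (hinj hv) m
end
end

noncomputable section

theorem alg_struct {n : ℕ} (hn : 2 ≤ n) (G : Fin n → Fin n → Fin n → ℂ)
    (dG : Fin n → Fin n → Fin n → Fin n → ℂ)
    (hG : ∀ k i j, G k i j = G k j i) (hdG : ∀ a k i j, dG a k i j = dG a k j i)
    (hflat : ∀ m a i j, dG a m i j + ∑ k, G m a k * G k i j =
      dG i m a j + ∑ k, G m i k * G k a j)
    (o : Fin n → ℂ) (ho : ∀ j, o j = -(1 / ((n : ℂ) + 1)) * ∑ k, G k k j)
    (d : Fin n → Fin n → ℂ) (hd : ∀ a j, d a j = -(1 / ((n : ℂ) + 1)) * ∑ k, dG a k k j)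
    (S : Fin n → Fin n → Fin n → ℂ)
    (hS : ∀ i j k, S i j k = G k i j + ((if k = i then 1 else 0) * o j
      + (if k = j then 1 else 0) * o i))
    (dS : Fin n → Fin n → Fin n → Fin n → ℂ)
    (hdS : ∀ a i j k, dS a i j k = dG a k i j + ((if k = i then 1 else 0) * d a j
      + (if k = j then 1 else 0) * d a i)) (i j : Fin n) :
    d i j = - o i * o j + ∑ k, S i j k * o k
      + (1 / ((n : ℂ) - 1)) * (∑ k, ∑ m, S i m k * S k j m - ∑ k, dS k i j k) := by
  have hn1 : (n : ℂ) + 1 ≠ 0 := by exact_mod_cast Nat.succ_ne_zero n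
  have hn2 : (n : ℂ) - 1 ≠ 0 := by
    rw [sub_ne_zero]
    exact_mod_cast (by omega : n ≠ 1)
  have htr : ∀ j, ∑ k, G k k j = -((n : ℂ) + 1) * o j := by
    intro j; rw [ho]; field_simp
  have htr' : ∀ j, ∑ k, G k j k = -((n : ℂ) + 1) * o j := by
    intro j; rw [← htr]; exact Finset.sum_congr rfl fun k _ => hG _ _ _
  have hdtr : ∀ a j, ∑ k, dG a k k j = -((n : ℂ) + 1) * d a j := by
    intro a j; rw [hd]; field_simp
  have hdsym : d j i = d i j := by
    have h1 : ∑ k, (dG j k i k + ∑ l, G k j l * G l i k) =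
        ∑ k, (dG i k j k + ∑ l, G k i l * G l j k) :=
      Finset.sum_congr rfl fun k _ => hflat k j i k
    rw [Finset.sum_add_distrib, Finset.sum_add_distrib] at h1
    have h2 : ∑ k, ∑ l, G k j l * G l i k = ∑ k, ∑ l, G k i l * G l j k := by
      rw [Finset.sum_comm]
      exact Finset.sum_congr rfl fun k _ => Finset.sum_congr rfl fun l _ => mul_comm _ _
    rw [h2] at h1
    have h3 := add_right_cancel h1
    simp_rw [fun k => hdG j k i k, fun k => hdG i k j k] at h3
    rw [hdtr, hdtr] at h3
    exact mul_left_cancel₀ (neg_ne_zero.mpr hn1) h3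
  have hc : ∑ k, dG k k i j + ∑ k, ∑ l, G k k l * G l i j =
      ∑ k, dG i k k j + ∑ k, ∑ l, G k i l * G l k j := by
    rw [← Finset.sum_add_distrib, ← Finset.sum_add_distrib]
    exact Finset.sum_congr rfl fun k _ => hflat k k i j
  have hY : ∑ k, ∑ l, G k k l * G l i j = -((n : ℂ) + 1) * ∑ l, G l i j * o l := by
    rw [Finset.sum_comm, Finset.mul_sum]
    refine Finset.sum_congr rfl fun l _ => ?_
    rw [← Finset.sum_mul, htr]; ring
  rw [hY, hdtr] at hc
  have hSo : ∑ k, S i j k * o k = ∑ l, G l i j * o l + 2 * o i * o j := by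
    simp_rw [hS, add_mul, Finset.sum_add_distrib]
    simp only [ite_mul, one_mul, zero_mul, Finset.sum_ite_eq', Finset.mem_univ, if_true]
    ring
  have hdiv : ∑ k, dS k i j k = ∑ k, dG k k i j + 2 * d i j := by
    simp_rw [hdS, Finset.sum_add_distrib]
    simp only [ite_mul, one_mul, zero_mul, Finset.sum_ite_eq', Finset.mem_univ, if_true]
    rw [hdsym]; ring
  have hSS : ∑ k, ∑ m, S i m k * S k j m = ∑ k, ∑ l, G k i l * G l k j
      + 2 * ∑ l, G l i j * o l + (1 - (n : ℂ)) * o i * o j := by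
    have e1 : ∀ k m, S i m k * S k j m = G k i m * G m k j
      + (if m = k then G k i m * o j else 0) + (if m = j then G k i m * o k else 0)
      + (if k = i then o m * G m k j else 0) + (if m = k then (if k = i then o m * o j else 0) else 0)
      + (if k = i then (if m = j then o m * o k else 0) else 0)
      + (if m = k then o i * G m k j else 0) + (if m = k then o i * o j else 0)
      + (if m = k then (if m = j then o i * o k else 0) else 0) := by
      intro k m
      rw [hS, hS]
      by_cases h1 : m = k <;> by_cases h2 : k = i <;> by_cases h3 : m = j <;>
        simp [h1, h2, h3, eq_comm] <;> ring_nf <;> grind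
    simp_rw [e1, Finset.sum_add_distrib]
    simp only [Finset.sum_ite_eq', Finset.mem_univ, if_true, Finset.sum_const, Finset.card_univ,
      Fintype.card_fin, nsmul_eq_mul]
    have e2 : ∑ k, ∑ m, (if k = i then o m * G m k j else 0) = ∑ l, G l i j * o l := by
      rw [Finset.sum_comm]
      simp only [Finset.sum_ite_eq', Finset.mem_univ, if_true]
      exact Finset.sum_congr rfl fun _ _ => mul_comm _ _
    have e3 : ∑ k, ∑ m, (if k = i then (if m = j then o m * o k else 0) else 0) = o j * o i := by
      rw [Finset.sum_comm]
      simp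
    rw [e2, e3, ← Finset.sum_mul, htr', ← Finset.mul_sum, htr]
    ring
  rw [hSo, hSS, hdiv]
  field_simp
  linear_combination hc

theorem struct_eq {n : ℕ} (hn : 2 ≤ n) {F : (Fin n → ℂ) → (Fin n → ℂ)} {U : Set (Fin n → ℂ)}
    (hU : IsOpen U) (hF : DifferentiableOn ℂ F U) (hJ : ∀ z ∈ U, JDet n F z ≠ 0)
    {z : Fin n → ℂ} (hz : z ∈ U) (i j : Fin n) :
    pd n i (om n F j) z = - om n F i z * om n F j z + ∑ k, oSchw n F i j k z * om n F k z
      + (1 / ((n : ℂ) - 1)) * (∑ k, ∑ m, oSchw n F i m k z * oSchw n F k j m z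
        - ∑ k, pd n k (oSchw n F i j k) z) := by
  refine alg_struct hn (fun k i j => Gam n F k i j z) (fun a k i j => pd n a (Gam n F k i j) z)
    (fun k i j => Gam_symm hU hF hz k i j)
    (fun a k i j => pd_congr hU (fun w hw => Gam_symm hU hF hw k i j) a hz)
    (fun m a i j => flat hU hF hJ hz m a i j) (fun j => om n F j z) (fun j => rfl)
    (fun a j => pd n a (om n F j) z) ?_ (fun i j k => oSchw n F i j k z)
    (fun i j k => oSchw_eq hU hF hJ hz i j k) (fun a i j k => pd n a (oSchw n F i j k) z) ?_ i j
  · intro a j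
    have h1 : ∀ k ∈ Finset.univ, DifferentiableAt ℂ (Gam n F k k j) z :=
      fun k _ => Gam_diffAt hU hF hJ hz k k j
    have := pd_const_mul a (-(1 / ((n : ℂ) + 1))) (DifferentiableAt.fun_sum h1)
    rw [pd_sum _ _ h1] at this
    exact this
  · intro a i j k
    have h1 := om_diffAt hU hF hJ hz
    have h2 := Gam_diffAt hU hF hJ hz k i j
    rw [pd_congr hU (fun w hw => oSchw_eq hU hF hJ hw i j k) a hz]
    rw [pd_add a h2 (((h1 j).const_mul _).fun_add ((h1 i).const_mul _)),
      pd_add a ((h1 j).const_mul _) ((h1 i).const_mul _), pd_const_mul a _ (h1 j),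
      pd_const_mul a _ (h1 i)]

theorem oSchw_symm {n : ℕ} {F : (Fin n → ℂ) → (Fin n → ℂ)} {U : Set (Fin n → ℂ)}
    (hU : IsOpen U) (hF : DifferentiableOn ℂ F U) (hJ : ∀ z ∈ U, JDet n F z ≠ 0)
    {z : Fin n → ℂ} (hz : z ∈ U) (i j k : Fin n) :
    oSchw n F i j k z = oSchw n F j i k z := by
  rw [oSchw_eq hU hF hJ hz, oSchw_eq hU hF hJ hz, Gam_symm hU hF hz]
  ring

theorem oSchw_trace {n : ℕ} {F : (Fin n → ℂ) → (Fin n → ℂ)} {U : Set (Fin n → ℂ)}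
    (hU : IsOpen U) (hF : DifferentiableOn ℂ F U) (hJ : ∀ z ∈ U, JDet n F z ≠ 0)
    {z : Fin n → ℂ} (hz : z ∈ U) (j : Fin n) :
    ∑ k, oSchw n F k j k z = 0 := by
  have hn1 : (n : ℂ) + 1 ≠ 0 := by exact_mod_cast Nat.succ_ne_zero n
  simp_rw [oSchw_eq hU hF hJ hz, Finset.sum_add_distrib]
  simp only [ite_mul, one_mul, zero_mul, Finset.sum_ite_eq', Finset.mem_univ, if_true,
    Finset.sum_const, Finset.card_univ, Fintype.card_fin, nsmul_eq_mul]
  unfold om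
  field_simp
  ring

theorem oSchw_diffAt {n : ℕ} {F : (Fin n → ℂ) → (Fin n → ℂ)} {U : Set (Fin n → ℂ)}
    (hU : IsOpen U) (hF : DifferentiableOn ℂ F U) (hJ : ∀ z ∈ U, JDet n F z ≠ 0)
    {z : Fin n → ℂ} (hz : z ∈ U) (i j k : Fin n) :
    DifferentiableAt ℂ (oSchw n F i j k) z := by
  have h1 := om_diffAt hU hF hJ hz
  have h2 := Gam_diffAt hU hF hJ hz k i j
  refine (h2.fun_add (((h1 j).const_mul (if k = i then (1:ℂ) else 0)).fun_add
    ((h1 i).const_mul (if k = j then (1:ℂ) else 0)))).congr_of_eventuallyEq ?_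
  filter_upwards [hU.mem_nhds hz] with w hw using oSchw_eq hU hF hJ hw i j k
end

noncomputable section

/-- Hermitian inner product, conjugate-linear in the second variable. -/
def ip {n : ℕ} (u v : Fin n → ℂ) : ℂ := ∑ i, u i * (starRingEnd ℂ) (v i)

/-- Squared Euclidean norm. -/
def nsq {n : ℕ} (v : Fin n → ℂ) : ℝ := ∑ i, ‖v i‖ ^ 2

/-- Normalized Bergman metric. -/
def gm {n : ℕ} (z v : Fin n → ℂ) : ℝ :=
  nsq v / (1 - nsq z) + ‖ip v z‖ ^ 2 / (1 - nsq z) ^ 2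

section
variable {n : ℕ}

theorem ip_add_left (u v w : Fin n → ℂ) : ip (u + v) w = ip u w + ip v w := by
  simp [ip, add_mul, Finset.sum_add_distrib]
theorem ip_sub_left (u v w : Fin n → ℂ) : ip (u - v) w = ip u w - ip v w := by
  simp [ip, sub_mul, Finset.sum_sub_distrib]
theorem ip_smul_left (c : ℂ) (u w : Fin n → ℂ) : ip (c • u) w = c * ip u w := by
  simp [ip, mul_assoc, Finset.mul_sum]
theorem ip_conj (u v : Fin n → ℂ) : (starRingEnd ℂ) (ip u v) = ip v u := by
  simp [ip, mul_comm]
theorem ip_add_right (u v w : Fin n → ℂ) : ip w (u + v) = ip w u + ip w v := by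
  simp [ip, mul_add, Finset.sum_add_distrib]
theorem ip_sub_right (u v w : Fin n → ℂ) : ip w (u - v) = ip w u - ip w v := by
  simp [ip, mul_sub, Finset.sum_sub_distrib]
theorem ip_smul_right (c : ℂ) (u w : Fin n → ℂ) : ip w (c • u) = (starRingEnd ℂ) c * ip w u := by
  simp only [ip, Pi.smul_apply, smul_eq_mul, map_mul, Finset.mul_sum]
  exact Finset.sum_congr rfl fun i _ => by ring
theorem ip_self (v : Fin n → ℂ) : ip v v = (nsq v : ℂ) := by
  simp only [ip, nsq, Complex.mul_conj, Complex.normSq_eq_norm_sq]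
  push_cast; rfl
theorem nsq_nonneg (v : Fin n → ℂ) : 0 ≤ nsq v := Finset.sum_nonneg fun _ _ => sq_nonneg _

theorem nsq_smul (c : ℂ) (v : Fin n → ℂ) : nsq (c • v) = ‖c‖ ^ 2 * nsq v := by
  simp [nsq, mul_pow, Finset.mul_sum]

theorem norm_sq_ip (u v : Fin n → ℂ) : ((‖ip u v‖ ^ 2 : ℝ) : ℂ) = ip u v * ip v u := by
  rw [← ip_conj u v, Complex.mul_conj, Complex.normSq_eq_norm_sq]

theorem cs (u v : Fin n → ℂ) : ‖ip u v‖ ^ 2 ≤ nsq u * nsq v := by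
  have h1 : ‖ip u v‖ ≤ ∑ i, ‖u i‖ * ‖v i‖ := by
    refine (norm_sum_le _ _).trans (le_of_eq ?_)
    simp
  calc ‖ip u v‖ ^ 2 ≤ (∑ i, ‖u i‖ * ‖v i‖) ^ 2 := by gcongr
    _ ≤ _ := Finset.sum_mul_sq_le_sq_mul_sq _ _ _

theorem gm_coe (z v : Fin n → ℂ) : ((gm z v : ℝ) : ℂ) =
    ip v v / (1 - ip z z) + ip v z * ip z v / (1 - ip z z) ^ 2 := by
  rw [← norm_sq_ip, ip_self, ip_self]
  unfold gm
  push_cast; rfl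

theorem gm_nonneg {z : Fin n → ℂ} (hz : nsq z < 1) (v : Fin n → ℂ) : 0 ≤ gm z v := by
  unfold gm
  have := nsq_nonneg v
  have : 0 < 1 - nsq z := by linarith
  positivity

theorem gm_smul (c : ℂ) (z v : Fin n → ℂ) : gm z (c • v) = ‖c‖ ^ 2 * gm z v := by
  unfold gm
  rw [nsq_smul, ip_smul_left, norm_mul]
  ring

/-- `c(a) = √(1-|a|²)`. -/
def cc (a : Fin n → ℂ) : ℝ := Real.sqrt (1 - nsq a)

/-- The linear part of the ball automorphism moving `0` to `a`. -/
def Tm (a v : Fin n → ℂ) : Fin n → ℂ :=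
  ((cc a : ℝ) : ℂ) • v + (((1 + cc a)⁻¹ : ℝ) * ip v a : ℂ) • a

theorem cc_facts {a : Fin n → ℂ} (ha : nsq a < 1) :
    ((cc a : ℝ) : ℂ) ^ 2 = 1 - ip a a ∧ (((1 + cc a)⁻¹ : ℝ) : ℂ) * (1 + (cc a : ℝ)) = 1 := by
  constructor
  · rw [ip_self]
    have : cc a ^ 2 = 1 - nsq a := Real.sq_sqrt (by linarith)
    exact_mod_cast this
  · have : (1 + cc a)⁻¹ * (1 + cc a) = 1 := inv_mul_cancel₀ (by
      have : 0 ≤ cc a := Real.sqrt_nonneg _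
      positivity)
    exact_mod_cast this

theorem Tm_a {a : Fin n → ℂ} (ha : nsq a < 1) (v : Fin n → ℂ) : ip (Tm a v) a = ip v a := by
  obtain ⟨h1, h2⟩ := cc_facts ha
  unfold Tm
  rw [ip_add_left, ip_smul_left, ip_smul_left]
  linear_combination ((((1 + cc a)⁻¹ : ℝ) : ℂ) * ip v a) * h1 + (1 - (cc a : ℂ)) * ip v a * h2

theorem Tm_symm (a u v : Fin n → ℂ) : ip (Tm a u) v = ip u (Tm a v) := by
  unfold Tm
  rw [ip_add_left, ip_smul_left, ip_smul_left, ip_add_right, ip_smul_right, ip_smul_right,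
    map_mul, ip_conj, Complex.conj_ofReal, Complex.conj_ofReal]
  ring

theorem Tm_sq {a : Fin n → ℂ} (ha : nsq a < 1) (v : Fin n → ℂ) :
    Tm a (Tm a v) = (1 - ip a a) • v + ip v a • a := by
  obtain ⟨h1, h2⟩ := cc_facts ha
  have h3 := Tm_a ha v
  funext i
  conv_lhs => unfold Tm
  simp only [Pi.add_apply, Pi.smul_apply, smul_eq_mul]
  change _ * (Tm a v i) + _ * ip (Tm a v) a * a i = _
  rw [h3]
  unfold Tm
  simp only [Pi.add_apply, Pi.smul_apply, smul_eq_mul]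
  linear_combination (v i) * h1 + (ip v a * a i) * h2

theorem Tm_ip {a : Fin n → ℂ} (ha : nsq a < 1) (u v : Fin n → ℂ) :
    ip (Tm a u) (Tm a v) = (1 - ip a a) * ip u v + ip u a * ip a v := by
  rw [← Tm_symm, Tm_sq ha, ip_add_left, ip_smul_left, ip_smul_left]

theorem norm_ip_lt {z a : Fin n → ℂ} (hz : nsq z < 1) (ha : nsq a < 1) : ‖ip z a‖ < 1 := by
  have h := cs z a
  have h1 := nsq_nonneg z
  have h2 := nsq_nonneg a
  have : ‖ip z a‖ ^ 2 < 1 := by nlinarith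
  nlinarith [norm_nonneg (ip z a)]

theorem den_ne {z a : Fin n → ℂ} (hz : nsq z < 1) (ha : nsq a < 1) : 1 + ip z a ≠ 0 := by
  intro h
  have h1 : ip z a = -1 := by linear_combination h
  have := norm_ip_lt hz ha
  rw [h1] at this
  simp at this

/-- The automorphism of the ball. -/
def sg (a z : Fin n → ℂ) : Fin n → ℂ := (1 + ip z a)⁻¹ • (a + Tm a z)

/-- Its differential. -/
def dsg (a z v : Fin n → ℂ) : Fin n → ℂ := (1 + ip z a)⁻¹ • (Tm a v - ip v a • sg a z)

theorem sg_nsq {a z : Fin n → ℂ} (ha : nsq a < 1) (hz : nsq z < 1) :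
    (1 + ip z a) * (1 + ip a z) * (1 - ip (sg a z) (sg a z)) = (1 - ip a a) * (1 - ip z z) := by
  have hd := den_ne hz ha
  have hd' : 1 + ip a z ≠ 0 := den_ne ha hz
  have hc : (starRingEnd ℂ) (1 + ip z a) = 1 + ip a z := by rw [map_add, ip_conj, map_one]
  have ha' : ip a (Tm a z) = ip a z := by
    rw [← ip_conj (Tm a z) a, Tm_a ha, ip_conj]
  have e : ip (sg a z) (sg a z) = (ip a a + ip a z + ip z a + ((1 - ip a a) * ip z z +
      ip z a * ip a z)) / ((1 + ip z a) * (1 + ip a z)) := by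
    unfold sg
    rw [ip_smul_left, ip_smul_right, map_inv₀, hc, ip_add_left, ip_add_right, ip_add_right,
      Tm_ip ha, Tm_a ha, ha']
    field_simp
    ring
  rw [e]
  field_simp
  ring

theorem sg_mem {a z : Fin n → ℂ} (ha : nsq a < 1) (hz : nsq z < 1) : nsq (sg a z) < 1 := by
  have h := sg_nsq ha hz
  have hd := den_ne hz ha
  have h2 : (1 + ip z a) * (1 + ip a z) = ((‖1 + ip z a‖ ^ 2 : ℝ) : ℂ) := by
    rw [← Complex.normSq_eq_norm_sq, ← Complex.mul_conj, map_add, ip_conj, map_one]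
  rw [h2, ip_self, ip_self, ip_self] at h
  have h3 : ‖1 + ip z a‖ ^ 2 * (1 - nsq (sg a z)) = (1 - nsq a) * (1 - nsq z) := by
    exact_mod_cast h
  have h4 : 0 < (1 - nsq a) * (1 - nsq z) := mul_pos (by linarith) (by linarith)
  rw [← h3] at h4
  have := pos_of_mul_pos_right h4 (by positivity)
  linarith

theorem one_sub_ne {z : Fin n → ℂ} (hz : nsq z < 1) : 1 - ip z z ≠ 0 := by
  rw [ip_self]
  have : 1 - nsq z ≠ 0 := by linarith
  exact_mod_cast this

/-- The automorphism is an isometry of the Bergman metric. -/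
theorem gm_iso {a z : Fin n → ℂ} (ha : nsq a < 1) (hz : nsq z < 1) (v : Fin n → ℂ) :
    gm (sg a z) (dsg a z v) = gm z v := by
  have hd := den_ne hz ha
  have hd' : 1 + ip a z ≠ 0 := den_ne ha hz
  have hc : (starRingEnd ℂ) (1 + ip z a) = 1 + ip a z := by rw [map_add, ip_conj, map_one]
  have h1 := sg_nsq ha hz
  have hq : ip (Tm a v) (sg a z) * (1 + ip a z) =
      ip v a * (1 + ip a z) + (1 - ip a a) * ip v z := by
    unfold sg
    rw [ip_smul_right, map_inv₀, hc, ip_add_right, Tm_a ha, Tm_ip ha]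
    field_simp; ring
  have hq' : ip (sg a z) (Tm a v) * (1 + ip z a) =
      ip a v * (1 + ip z a) + (1 - ip a a) * ip z v := by
    have := congrArg (starRingEnd ℂ) hq
    simpa only [map_mul, map_add, map_sub, map_one, ip_conj] using this
  have hy := one_sub_ne (sg_mem ha hz)
  have hz0 := one_sub_ne hz
  have ha0 := one_sub_ne ha
  have key : ((gm (sg a z) (dsg a z v) : ℝ) : ℂ) = ((gm z v : ℝ) : ℂ) := by
    rw [gm_coe, gm_coe]
    have e1 : ip (dsg a z v) (dsg a z v) = ((1 - ip a a) * ip v v + ip v a * ip a v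
        - ip a v * ip (Tm a v) (sg a z) - ip v a * ip (sg a z) (Tm a v)
        + ip v a * ip a v * ip (sg a z) (sg a z)) / ((1 + ip z a) * (1 + ip a z)) := by
      unfold dsg
      simp only [ip_smul_left, ip_smul_right, map_inv₀, hc, ip_sub_left, ip_sub_right, Tm_ip ha,
        ip_conj]
      field_simp
      ring
    have e2 : ip (dsg a z v) (sg a z) =
        (ip (Tm a v) (sg a z) - ip v a * ip (sg a z) (sg a z)) / (1 + ip z a) := by
      unfold dsg
      simp only [ip_smul_left, ip_sub_left]
      field_simp
    have e3 : ip (sg a z) (dsg a z v) =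
        (ip (sg a z) (Tm a v) - ip a v * ip (sg a z) (sg a z)) / (1 + ip a z) := by
      unfold dsg
      simp only [ip_smul_right, ip_sub_right, map_inv₀, hc, ip_conj]
      field_simp
    rw [e1, e2, e3]
    generalize ip (sg a z) (sg a z) = Y at *
    generalize ip (Tm a v) (sg a z) = q at *
    generalize ip (sg a z) (Tm a v) = q' at *
    have hY : 1 - Y = (1 - ip a a) * (1 - ip z z) / ((1 + ip z a) * (1 + ip a z)) := by
      rw [← h1]; field_simp
    have hq1 : q = ip v a + (1 - ip a a) * ip v z / (1 + ip a z) := by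
      field_simp; linear_combination hq
    have hq2 : q' = ip a v + (1 - ip a a) * ip z v / (1 + ip z a) := by
      field_simp; linear_combination hq'
    have step : ((1 - ip a a) * ip v v + ip v a * ip a v - ip a v * q - ip v a * q'
        + ip v a * ip a v * Y) / ((1 + ip z a) * (1 + ip a z)) / (1 - Y)
        + (q - ip v a * Y) / (1 + ip z a) * ((q' - ip a v * Y) / (1 + ip a z)) / (1 - Y) ^ 2
        = ((1 - ip a a) * ip v v * (1 - Y) + (q - ip v a) * (q' - ip a v))
          / ((1 + ip z a) * (1 + ip a z)) / (1 - Y) ^ 2 := by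
      field_simp
      ring
    rw [step, hY, hq1, hq2]
    field_simp
    ring
  exact_mod_cast key

/-- Explicit inverse of the differential. -/
def isg (a z V : Fin n → ℂ) : Fin n → ℂ :=
  ((1 + ip z a) / (1 - ip a a)) • (Tm a V + ip V a • z)

theorem dsg_isg {a z : Fin n → ℂ} (ha : nsq a < 1) (hz : nsq z < 1) (V : Fin n → ℂ) :
    dsg a z (isg a z V) = V := by
  have hd := den_ne hz ha
  have ha0 := one_sub_ne ha
  have e1 : ∀ c : ℂ, ∀ u v : Fin n → ℂ, Tm a (c • (u + v)) = c • (Tm a u + Tm a v) := by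
    intro c u v
    funext i
    simp only [Tm, ip_smul_left, ip_add_left, Pi.add_apply, Pi.smul_apply, smul_eq_mul]
    ring
  have e2 : ∀ c : ℂ, ∀ u : Fin n → ℂ, Tm a (c • u) = c • Tm a u := by
    intro c u
    funext i
    simp only [Tm, ip_smul_left, Pi.add_apply, Pi.smul_apply, smul_eq_mul]
    ring
  unfold dsg isg
  rw [e1, e2, Tm_sq ha, ip_smul_left, ip_add_left, ip_smul_left, Tm_a ha]
  unfold sg
  funext i
  simp only [Pi.add_apply, Pi.smul_apply, Pi.sub_apply, smul_eq_mul]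
  field_simp
  ring

theorem gm_isg {a z : Fin n → ℂ} (ha : nsq a < 1) (hz : nsq z < 1) (V : Fin n → ℂ) :
    gm z (isg a z V) = gm (sg a z) V := by
  rw [← gm_iso ha hz, dsg_isg ha hz]

theorem ip_zero_left (a : Fin n → ℂ) : ip 0 a = 0 := by simp [ip]
theorem ip_zero_right (a : Fin n → ℂ) : ip a 0 = 0 := by simp [ip]
theorem nsq_zero : nsq (0 : Fin n → ℂ) = 0 := by simp [nsq]
theorem Tm_zero (a : Fin n → ℂ) : Tm a 0 = 0 := by simp [Tm, ip_zero_left]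
theorem sg_zero (a : Fin n → ℂ) : sg a 0 = a := by simp [sg, ip_zero_left, Tm_zero]
theorem dsg_zero (a v : Fin n → ℂ) : dsg a 0 v = Tm a v - ip v a • a := by
  simp [dsg, ip_zero_left, sg_zero]
theorem gm_zero (v : Fin n → ℂ) : gm 0 v = nsq v := by simp [gm, nsq_zero, ip_zero_right]
end
end

noncomputable section

/-- The bilinear operator built from Schwarzian coefficients. -/
def Sop {n : ℕ} (S : Fin n → Fin n → Fin n → ℂ) (u v : Fin n → ℂ) : Fin n → ℂ :=
  fun k => ∑ i, ∑ j, u i * S i j k * v j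

section
variable {n : ℕ}

theorem nsq_eq_norm (v : Fin n → ℂ) : nsq v = ‖(WithLp.toLp 2 v : EuclideanSpace ℂ (Fin n))‖ ^ 2 := by
  rw [EuclideanSpace.norm_sq_eq]; rfl

theorem nsq_sub_le {x y : Fin n → ℂ} {A B : ℝ} (hA : 0 ≤ A) (hB : 0 ≤ B)
    (hx : nsq x ≤ A ^ 2) (hy : nsq y ≤ B ^ 2) : nsq (x - y) ≤ (A + B) ^ 2 := by
  rw [nsq_eq_norm] at *
  have h1 := abs_le_of_sq_le_sq hx hA
  have h2 := abs_le_of_sq_le_sq hy hB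
  rw [abs_of_nonneg (norm_nonneg _)] at h1 h2
  rw [WithLp.toLp_sub]
  have := norm_sub_le (WithLp.toLp 2 x : EuclideanSpace ℂ (Fin n)) (WithLp.toLp 2 y)
  gcongr
  linarith

theorem isg_sub (a z u v : Fin n → ℂ) : isg a z (u - v) = isg a z u - isg a z v := by
  funext i
  simp only [isg, Tm, ip_sub_left, Pi.add_apply, Pi.smul_apply, Pi.sub_apply, smul_eq_mul]
  ring

theorem gm_eq_nsq {a : Fin n → ℂ} (ha : nsq a < 1) (V : Fin n → ℂ) : gm a V = nsq (isg a 0 V) := by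
  have h0 : nsq (0 : Fin n → ℂ) < 1 := by rw [nsq_zero]; norm_num
  have := gm_isg ha h0 V
  rw [sg_zero, gm_zero] at this
  exact this.symm

theorem gm_dsg {a : Fin n → ℂ} (ha : nsq a < 1) (v : Fin n → ℂ) : gm a (dsg a 0 v) = nsq v := by
  have h0 : nsq (0 : Fin n → ℂ) < 1 := by rw [nsq_zero]; norm_num
  have := gm_iso ha h0 v
  rw [sg_zero, gm_zero] at this
  exact this

theorem gm_sub_le {a x y : Fin n → ℂ} (ha : nsq a < 1) {A B : ℝ} (hA : 0 ≤ A) (hB : 0 ≤ B)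
    (hx : gm a x ≤ A ^ 2) (hy : gm a y ≤ B ^ 2) : gm a (x - y) ≤ (A + B) ^ 2 := by
  rw [gm_eq_nsq ha] at *
  rw [isg_sub]
  exact nsq_sub_le hA hB hx hy

theorem gm_par (a u v : Fin n → ℂ) : gm a (u + v) + gm a (u - v) = 2 * gm a u + 2 * gm a v := by
  have : ((gm a (u + v) + gm a (u - v) : ℝ) : ℂ) = ((2 * gm a u + 2 * gm a v : ℝ) : ℂ) := by
    push_cast
    rw [gm_coe, gm_coe, gm_coe, gm_coe]
    simp only [ip_add_left, ip_add_right, ip_sub_left, ip_sub_right]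
    ring
  exact_mod_cast this

theorem Sop_polar {S : Fin n → Fin n → Fin n → ℂ} (hs : ∀ i j k, S i j k = S j i k)
    (u v : Fin n → ℂ) :
    (4 : ℂ) • Sop S u v = Sop S (u + v) (u + v) - Sop S (u - v) (u - v) := by
  funext k
  simp only [Sop, Pi.smul_apply, Pi.sub_apply, Pi.add_apply, smul_eq_mul]
  have h : ∑ i, ∑ j, u i * S i j k * v j = ∑ i, ∑ j, v i * S i j k * u j := by
    rw [Finset.sum_comm]
    refine Finset.sum_congr rfl fun i _ => Finset.sum_congr rfl fun j _ => ?_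
    rw [hs]; ring
  rw [← Finset.sum_sub_distrib]
  have : ∀ i, (∑ j, (u i + v i) * S i j k * (u j + v j) - ∑ j, (u i - v i) * S i j k * (u j - v j))
      = 2 * ∑ j, u i * S i j k * v j + 2 * ∑ j, v i * S i j k * u j := by
    intro i
    rw [← Finset.sum_sub_distrib, Finset.mul_sum, Finset.mul_sum, ← Finset.sum_add_distrib]
    refine Finset.sum_congr rfl fun j _ => ?_
    ring
  rw [Finset.sum_congr rfl fun i _ => this i, Finset.sum_add_distrib, ← Finset.mul_sum,
    ← Finset.mul_sum, ← h]
  ring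

theorem Sop_bilin_bound {S : Fin n → Fin n → Fin n → ℂ} (hs : ∀ i j k, S i j k = S j i k)
    {a : Fin n → ℂ} (ha : nsq a < 1) {K : ℝ} (hK : 0 ≤ K)
    (hb : ∀ v, gm a (Sop S v v) ≤ K ^ 2 * gm a v ^ 2) (u v : Fin n → ℂ) (huv : gm a u = gm a v) :
    gm a (Sop S u v) ≤ (K * gm a u) ^ 2 := by
  have h1 := hb (u + v)
  have h2 := hb (u - v)
  rw [← mul_pow] at h1 h2
  have h3 := gm_sub_le ha (mul_nonneg hK (gm_nonneg ha _)) (mul_nonneg hK (gm_nonneg ha _)) h1 h2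
  rw [← Sop_polar hs, gm_smul, ← mul_add, gm_par, ← huv] at h3
  norm_num at h3
  nlinarith

theorem Sop_bilin_bound2 {S : Fin n → Fin n → Fin n → ℂ} (hs : ∀ i j k, S i j k = S j i k)
    {a : Fin n → ℂ} (ha : nsq a < 1) {K : ℝ} (hK : 0 ≤ K)
    (hb : ∀ v, gm a (Sop S v v) ≤ K ^ 2 * gm a v ^ 2) (u v : Fin n → ℂ) (hu : 0 < gm a u)
    (hv : gm a v = 1) :
    gm a (Sop S u v) ≤ K ^ 2 * gm a u := by
  have h := Sop_bilin_bound hs ha hK hb u (((Real.sqrt (gm a u) : ℝ) : ℂ) • v) (by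
    rw [gm_smul, hv, Complex.norm_real, Real.norm_eq_abs, sq_abs, Real.sq_sqrt hu.le, mul_one])
  have e : Sop S u (((Real.sqrt (gm a u) : ℝ) : ℂ) • v) = ((Real.sqrt (gm a u) : ℝ) : ℂ) • Sop S u v := by
    funext k
    simp only [Sop, Pi.smul_apply, smul_eq_mul, Finset.mul_sum]
    exact Finset.sum_congr rfl fun i _ => Finset.sum_congr rfl fun j _ => by ring
  rw [e, gm_smul, Complex.norm_real, Real.norm_eq_abs, sq_abs, Real.sq_sqrt hu.le] at h
  have : gm a u * gm a (Sop S u v) ≤ gm a u * (K ^ 2 * gm a u) := by nlinarith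
  exact le_of_mul_le_mul_left this hu

theorem Tm_add (a u v : Fin n → ℂ) : Tm a (u + v) = Tm a u + Tm a v := by
  funext i
  simp only [Tm, ip_add_left, Pi.add_apply, Pi.smul_apply, smul_eq_mul]
  ring
theorem Tm_smul (a : Fin n → ℂ) (c : ℂ) (u : Fin n → ℂ) : Tm a (c • u) = c • Tm a u := by
  funext i
  simp only [Tm, ip_smul_left, Pi.add_apply, Pi.smul_apply, smul_eq_mul]
  ring

/-- Matrix of `Tm`. -/
def TM (a : Fin n → ℂ) : Matrix (Fin n) (Fin n) ℂ := Matrix.of fun i j => Tm a (Pi.single j 1) i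

/-- Matrix of the differential at zero. -/
def LM (a : Fin n → ℂ) : Matrix (Fin n) (Fin n) ℂ := Matrix.of fun i j => dsg a 0 (Pi.single j 1) i

theorem TM_mulVec (a v : Fin n → ℂ) : (TM a).mulVec v = Tm a v := by
  have e : TM a = LinearMap.toMatrix' { toFun := Tm a, map_add' := Tm_add a, map_smul' := Tm_smul a } := by
    ext i j
    rw [LinearMap.toMatrix'_apply]
    simp [TM]
  rw [e, LinearMap.toMatrix'_mulVec]; rfl

theorem LM_mulVec (a v : Fin n → ℂ) : (LM a).mulVec v = dsg a 0 v := by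
  have e : LM a = LinearMap.toMatrix' { toFun := dsg a 0, map_add' := fun u v => by
                                          simp only [dsg_zero, Tm_add, ip_add_left, add_smul]; abel
                                        map_smul' := fun c u => by
                                          simp only [dsg_zero, Tm_smul, ip_smul_left, mul_smul,
                                            smul_sub, RingHom.id_apply] } := by
    ext i j
    rw [LinearMap.toMatrix'_apply]
    simp [LM]
  rw [e, LinearMap.toMatrix'_mulVec]; rfl

theorem isg_zero (a V : Fin n → ℂ) : isg a 0 V = (1 - ip a a)⁻¹ • Tm a V := by
  simp [isg, ip_zero_left]

theorem LM_TM {a : Fin n → ℂ} (ha : nsq a < 1) : LM a * TM a = (1 - ip a a) • (1 : Matrix _ _ ℂ) := by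
  have h0 : nsq (0 : Fin n → ℂ) < 1 := by rw [nsq_zero]; norm_num
  refine Matrix.toLin'.injective (LinearMap.ext fun v => ?_)
  simp only [Matrix.toLin'_apply]
  rw [← Matrix.mulVec_mulVec, TM_mulVec, Matrix.smul_mulVec, Matrix.one_mulVec]
  have e : Tm a v = (1 - ip a a) • isg a 0 v := by
    rw [isg_zero, smul_smul, mul_inv_cancel₀ (one_sub_ne ha), one_smul]
  rw [e, Matrix.mulVec_smul, LM_mulVec, dsg_isg ha h0]

theorem nsq_single (k : Fin n) : nsq (Pi.single k 1 : Fin n → ℂ) = 1 := by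
  unfold nsq
  rw [Finset.sum_eq_single k] <;> simp +contextual

/-- Bound of the trace of the square. -/
theorem tr_bound {S : Fin n → Fin n → Fin n → ℂ} (hs : ∀ i j k, S i j k = S j i k)
    {a : Fin n → ℂ} (ha : nsq a < 1) {K : ℝ} (hK : 0 ≤ K)
    (hb : ∀ v, gm a (Sop S v v) ≤ K ^ 2 * gm a v ^ 2) (ξ : Fin n → ℂ) (hξ : 0 < gm a ξ) :
    ‖∑ k, ∑ m, (∑ i, ξ i * S i m k) * (∑ i, ξ i * S i k m)‖ ≤ n * K ^ 2 * gm a ξ := by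
  set M : Matrix (Fin n) (Fin n) ℂ := Matrix.of fun k m => ∑ i, ξ i * S i m k with hM
  have hMv : ∀ v, M.mulVec v = Sop S ξ v := by
    intro v
    funext k
    simp only [hM, Matrix.mulVec, dotProduct, Matrix.of_apply, Sop, Finset.sum_mul]
    rw [Finset.sum_comm]
  have h1 : ∑ k, ∑ m, (∑ i, ξ i * S i m k) * (∑ i, ξ i * S i k m) = (M * M).trace := by
    simp [Matrix.trace, Matrix.mul_apply, hM]
  have ha0 := one_sub_ne ha
  set X : Matrix (Fin n) (Fin n) ℂ := (1 - ip a a)⁻¹ • (TM a * M * LM a) with hX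
  have h2 : (M * M).trace = (X * X).trace := by
    have e : X * X = (1 - ip a a)⁻¹ • (TM a * (M * M * LM a)) := by
      rw [hX, Matrix.smul_mul, Matrix.mul_smul]
      have : TM a * M * LM a * (TM a * M * LM a) = TM a * M * (LM a * TM a) * (M * LM a) := by
        simp only [Matrix.mul_assoc]
      rw [this, LM_TM ha, Matrix.mul_smul, Matrix.smul_mul, smul_smul, smul_smul, mul_assoc,
        inv_mul_cancel₀ ha0, mul_one, Matrix.mul_one]
      simp only [Matrix.mul_assoc]
    rw [e, Matrix.trace_smul, Matrix.trace_mul_comm (TM a), Matrix.mul_assoc, LM_TM ha, Matrix.mul_smul,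
      Matrix.mul_one, Matrix.trace_smul, smul_smul, inv_mul_cancel₀ ha0, one_smul]
  have hXv : ∀ v, X.mulVec v = isg a 0 (Sop S ξ (dsg a 0 v)) := by
    intro v
    rw [hX, Matrix.smul_mulVec, ← Matrix.mulVec_mulVec, ← Matrix.mulVec_mulVec, LM_mulVec, hMv,
      TM_mulVec, isg_zero]
  have hcol : ∀ k, ∑ i, ‖X i k‖ ^ 2 ≤ K ^ 2 * gm a ξ := by
    intro k
    have e1 : (∑ i, ‖X i k‖ ^ 2) = nsq (X.mulVec (Pi.single k 1)) := by
      simp [nsq]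
    rw [e1, hXv, ← gm_eq_nsq ha]
    exact Sop_bilin_bound2 hs ha hK hb _ _ hξ (by rw [gm_dsg ha, nsq_single])
  rw [h1, h2]
  have h3 : (X * X).trace = ∑ k, ∑ m, X k m * X m k := by simp [Matrix.trace, Matrix.mul_apply]
  rw [h3]
  calc ‖∑ k, ∑ m, X k m * X m k‖ ≤ ∑ k, ∑ m, ‖X k m‖ * ‖X m k‖ := by
        refine (norm_sum_le _ _).trans (Finset.sum_le_sum fun k _ => (norm_sum_le _ _).trans
          (le_of_eq ?_))
        simp
    _ ≤ ∑ k, ∑ m, (‖X k m‖ ^ 2 + ‖X m k‖ ^ 2) / 2 := by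
        refine Finset.sum_le_sum fun k _ => Finset.sum_le_sum fun m _ => ?_
        nlinarith [sq_nonneg (‖X k m‖ - ‖X m k‖)]
    _ = ∑ k, ∑ i, ‖X i k‖ ^ 2 := by
        simp only [← Finset.sum_div, Finset.sum_add_distrib]
        rw [Finset.sum_comm (f := fun x y => ‖X x y‖ ^ 2)]
        ring
    _ ≤ ∑ k : Fin n, K ^ 2 * gm a ξ := Finset.sum_le_sum fun k _ => hcol k
    _ = _ := by simp; ring
end
end

noncomputable section
section
variable {n : ℕ}

theorem fderiv_eq_sum (f : (Fin n → ℂ) → ℂ) (a v : Fin n → ℂ) :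
    fderiv ℂ f a v = ∑ l, v l * pd n l f a := by
  conv_lhs => rw [pi_eq_sum_univ' v]
  simp only [map_sum, map_smul, smul_eq_mul, pd]

theorem ip_single (v : Fin n → ℂ) (k : Fin n) : ip v (Pi.single k 1) = v k := by
  unfold ip
  rw [Finset.sum_eq_single k] <;> simp +contextual

theorem single_ip (v : Fin n → ℂ) (k : Fin n) : ip (Pi.single k 1) v = (starRingEnd ℂ) (v k) := by
  rw [← ip_conj, ip_single]

theorem trace_id {a : Fin n → ℂ} (ha : nsq a < 1) (G : Matrix (Fin n) (Fin n) ℂ) :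
    ∑ k, ip (G.mulVec (dsg a 0 (Pi.single k 1))) (Tm a (Pi.single k 1)) = (1 - ip a a) * G.trace := by
  have h : ∀ k, ip (G.mulVec (dsg a 0 (Pi.single k 1))) (Tm a (Pi.single k 1)) =
      (TM a * (G * LM a)) k k := by
    intro k
    rw [← Tm_symm, ip_single, ← LM_mulVec, ← TM_mulVec, Matrix.mulVec_mulVec, Matrix.mulVec_mulVec]
    simp [Matrix.mul_assoc]
  rw [Finset.sum_congr rfl fun k _ => h k]
  change (TM a * (G * LM a)).trace = _
  rw [Matrix.trace_mul_comm, Matrix.mul_assoc, LM_TM ha, Matrix.mul_smul, Matrix.mul_one,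
    Matrix.trace_smul, smul_eq_mul]

theorem sum_ip_T {a : Fin n → ℂ} (ha : nsq a < 1) (V : Fin n → ℂ) :
    ∑ k, ip (Pi.single k 1) a * ip V (Tm a (Pi.single k 1)) = ip V a := by
  have h : ∀ k, ip (Pi.single k 1) a * ip V (Tm a (Pi.single k 1)) =
      Tm a V k * (starRingEnd ℂ) (a k) := by
    intro k
    rw [← Tm_symm, ip_single, single_ip, mul_comm]
  rw [Finset.sum_congr rfl fun k _ => h k]
  exact Tm_a ha V

/-- Auxiliary one-variable function. -/
def Phi (S : Fin n → Fin n → Fin n → (Fin n → ℂ) → ℂ) (a w e : Fin n → ℂ) (t : ℂ) : ℂ :=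
  ip (isg a (t • e) (Sop (fun i j k => S i j k (sg a (t • e))) (dsg a (t • e) w)
    (dsg a (t • e) w))) e

theorem Phi_bound {S : Fin n → Fin n → Fin n → (Fin n → ℂ) → ℂ} {K : ℝ} (hK : 0 ≤ K)
    (hb : ∀ z, nsq z < 1 → ∀ v, gm z (Sop (fun i j k => S i j k z) v v) ≤ K ^ 2 * gm z v ^ 2)
    {a : Fin n → ℂ} (ha : nsq a < 1) (w : Fin n → ℂ) {e : Fin n → ℂ} (he : nsq e = 1) {t : ℂ}
    (ht : ‖t‖ = 1 / 2) : ‖Phi S a w e t‖ ≤ 4 / 3 * K * nsq w := by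
  have hte : nsq (t • e) = 1 / 4 := by rw [nsq_smul, he, ht]; norm_num
  have hte' : nsq (t • e) < 1 := by rw [hte]; norm_num
  have hconj : ∀ v, ‖ip v (t • e)‖ ^ 2 = 1 / 4 * ‖ip v e‖ ^ 2 := by
    intro v
    rw [ip_smul_right, norm_mul, RCLike.norm_conj, ht]; ring
  set y := sg a (t • e) with hy
  set x := dsg a (t • e) w with hx
  set V := Sop (fun i j k => S i j k y) x x with hV
  have h1 : gm y V ≤ K ^ 2 * gm y x ^ 2 := hb y (sg_mem ha hte') x
  rw [hx, hy, gm_iso ha hte', ← gm_isg ha hte'] at h1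
  have h2 : ‖ip (isg a (t • e) V) e‖ ^ 2 ≤ 9 / 16 * gm (t • e) (isg a (t • e) V) := by
    have := cs (isg a (t • e) V) e
    unfold gm
    rw [hconj, hte]
    rw [he] at this
    norm_num
    linarith
  have h3 : gm (t • e) w ≤ 16 / 9 * nsq w := by
    have := cs w e
    unfold gm
    rw [hconj, hte]
    rw [he] at this
    norm_num
    linarith
  have h4 := gm_nonneg hte' w
  have h5 := nsq_nonneg w
  have h6 : K * gm (t • e) w ≤ K * (16 / 9 * nsq w) := by gcongr
  have h7 : 0 ≤ K * gm (t • e) w := by positivity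
  have h8 : (K * gm (t • e) w) ^ 2 ≤ (K * (16 / 9 * nsq w)) ^ 2 := by gcongr
  refine abs_le_of_sq_le_sq' ?_ (by positivity) |>.2
  change ‖ip (isg a (t • e) V) e‖ ^ 2 ≤ _
  nlinarith

theorem hasDeriv_y (a e : Fin n → ℂ) (i : Fin n) {t : ℂ} (ht : 1 + ip (t • e) a ≠ 0) :
    DifferentiableAt ℂ (fun t : ℂ => sg a (t • e) i) t := by
  have hf : (fun t : ℂ => sg a (t • e) i) = fun t => (1 + t * ip e a)⁻¹ * (a i + t * Tm a e i) := by
    funext t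
    simp [sg, ip_smul_left, Tm_smul]
  rw [hf]
  rw [ip_smul_left] at ht
  refine DifferentiableAt.mul (DifferentiableAt.inv (by fun_prop) ht) (by fun_prop)

theorem hasDeriv_y0 (a e : Fin n → ℂ) (i : Fin n) :
    HasDerivAt (fun t : ℂ => sg a (t • e) i) (dsg a 0 e i) 0 := by
  have hf : (fun t : ℂ => sg a (t • e) i) = fun t => (1 + t * ip e a)⁻¹ * (a i + t * Tm a e i) := by
    funext t
    simp [sg, ip_smul_left, Tm_smul]
  rw [hf]
  have h1 : HasDerivAt (fun t : ℂ => 1 + t * ip e a) (ip e a) 0 := by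
    simpa using ((hasDerivAt_id (0:ℂ)).mul_const (ip e a)).const_add 1
  have h2 : HasDerivAt (fun t : ℂ => a i + t * Tm a e i) (Tm a e i) 0 := by
    simpa using ((hasDerivAt_id (0:ℂ)).mul_const (Tm a e i)).const_add (a i)
  have h3 := (h1.fun_inv (by simp)).fun_mul h2
  refine h3.congr_deriv ?_
  simp [dsg_zero]
  ring

theorem hasDeriv_x (a e w : Fin n → ℂ) (i : Fin n) {t : ℂ} (ht : 1 + ip (t • e) a ≠ 0) :
    DifferentiableAt ℂ (fun t : ℂ => dsg a (t • e) w i) t := by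
  have hf : (fun t : ℂ => dsg a (t • e) w i) =
      fun t => (1 + t * ip e a)⁻¹ * (Tm a w i - ip w a * sg a (t • e) i) := by
    funext t
    simp [dsg, ip_smul_left]
  rw [hf]
  have := hasDeriv_y a e i ht
  rw [ip_smul_left] at ht
  refine DifferentiableAt.mul (DifferentiableAt.inv (by fun_prop) ht) (by fun_prop)

theorem hasDeriv_x0 (a e w : Fin n → ℂ) (i : Fin n) :
    HasDerivAt (fun t : ℂ => dsg a (t • e) w i)
      (- ip e a * dsg a 0 w i - ip w a * dsg a 0 e i) 0 := by
  have hf : (fun t : ℂ => dsg a (t • e) w i) =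
      fun t => (1 + t * ip e a)⁻¹ * (Tm a w i - ip w a * sg a (t • e) i) := by
    funext t
    simp [dsg, ip_smul_left]
  rw [hf]
  have h1 : HasDerivAt (fun t : ℂ => 1 + t * ip e a) (ip e a) 0 := by
    simpa using ((hasDerivAt_id (0:ℂ)).mul_const (ip e a)).const_add 1
  have h2 := ((hasDeriv_y0 a e i).const_mul (ip w a)).const_sub (Tm a w i)
  have h3 := (h1.fun_inv (by simp)).fun_mul h2
  refine h3.congr_deriv ?_
  simp [dsg_zero, sg_zero]
  ring

theorem Phi_eq (S : Fin n → Fin n → Fin n → (Fin n → ℂ) → ℂ) (a w e : Fin n → ℂ) (he : nsq e = 1)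
    (V : ℂ → Fin n → ℂ) (hV : ∀ t, V t = Sop (fun i j k => S i j k (sg a (t • e)))
      (dsg a (t • e) w) (dsg a (t • e) w)) (t : ℂ) :
    Phi S a w e t = (1 + t * ip e a) / (1 - ip a a) *
      ((∑ m, V t m * (starRingEnd ℂ) (Tm a e m)) + t * ∑ m, V t m * (starRingEnd ℂ) (a m)) := by
  have h1 : ip e e = 1 := by rw [ip_self, he]; simp
  unfold Phi
  rw [← hV]
  unfold isg
  rw [ip_smul_left, ip_add_left, ip_smul_left, ip_smul_left, ip_smul_left, h1, Tm_symm]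
  unfold ip
  ring

/-- Derivative of the auxiliary function at zero. -/
theorem Phi_deriv {S : Fin n → Fin n → Fin n → (Fin n → ℂ) → ℂ}
    {a : Fin n → ℂ} (hs : ∀ i j k, S i j k a = S j i k a)
    (hd : ∀ i j k, DifferentiableAt ℂ (S i j k) a)
    (w e : Fin n → ℂ) (he : nsq e = 1) :
    HasDerivAt (Phi S a w e) ((1 - ip a a)⁻¹ * (
      ip (fun m => ∑ i, ∑ j, dsg a 0 w i * fderiv ℂ (S i j m) a (dsg a 0 e) * dsg a 0 w j) (Tm a e)
      - ip e a * ip (Sop (fun i j k => S i j k a) (dsg a 0 w) (dsg a 0 w)) (Tm a e)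
      - 2 * ip w a * ip (Sop (fun i j k => S i j k a) (dsg a 0 w) (dsg a 0 e)) (Tm a e)
      + ip (Sop (fun i j k => S i j k a) (dsg a 0 w) (dsg a 0 w)) a)) 0 := by
  set V : ℂ → Fin n → ℂ := fun t => Sop (fun i j k => S i j k (sg a (t • e)))
      (dsg a (t • e) w) (dsg a (t • e) w) with hVdef
  have hPhi : Phi S a w e = fun t => (1 + t * ip e a) / (1 - ip a a) *
      ((∑ m, V t m * (starRingEnd ℂ) (Tm a e m)) + t * ∑ m, V t m * (starRingEnd ℂ) (a m)) :=
    funext fun t => Phi_eq S a w e he V (fun t => rfl) t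
  have hy : HasDerivAt (fun t : ℂ => sg a (t • e)) (dsg a 0 e) 0 :=
    hasDerivAt_pi.2 fun i => hasDeriv_y0 a e i
  have hS : ∀ i j m, HasDerivAt (fun t : ℂ => S i j m (sg a (t • e)))
      (fderiv ℂ (S i j m) a (dsg a 0 e)) 0 := by
    intro i j m
    have h0 : sg a ((0 : ℂ) • e) = a := by rw [zero_smul, sg_zero]
    have h1 : HasFDerivAt (S i j m) (fderiv ℂ (S i j m) a) (sg a ((0 : ℂ) • e)) := by
      rw [h0]; exact (hd i j m).hasFDerivAt
    exact h1.comp_hasDerivAt (0 : ℂ) hy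
  set x := dsg a 0 w with hx
  set L := dsg a 0 e with hL
  set V0 := Sop (fun i j k => S i j k a) x x with hV0
  set D : Fin n → ℂ := fun m => ∑ i, ∑ j, x i * fderiv ℂ (S i j m) a L * x j with hD
  have hV' : ∀ m, HasDerivAt (fun t => V t m) (D m - 2 * ip e a * V0 m
      - 2 * ip w a * Sop (fun i j k => S i j k a) x L m) 0 := by
    intro m
    have h := HasDerivAt.fun_sum (u := Finset.univ) fun i _ => HasDerivAt.fun_sum (u := Finset.univ)
      fun j _ => ((hasDeriv_x0 a e w i).fun_mul (hS i j m)).fun_mul (hasDeriv_x0 a e w j)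
    refine HasDerivAt.congr_deriv h ?_
    simp only [zero_smul, sg_zero, ← hx, ← hL, hD, hV0, Sop, Finset.mul_sum]
    have hsw : ∑ i, ∑ j, 2 * ip w a * (x i * S i j m a * L j) =
        ∑ i, ∑ j, (ip w a * (x i * S i j m a * L j) + ip w a * (L i * S i j m a * x j)) := by
      simp only [Finset.sum_add_distrib]
      rw [Finset.sum_comm (f := fun i j => ip w a * (L i * S i j m a * x j)),
        ← Finset.sum_add_distrib]
      refine Finset.sum_congr rfl fun i _ => ?_
      rw [← Finset.sum_add_distrib]
      refine Finset.sum_congr rfl fun j _ => ?_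
      rw [hs j i]; ring
    rw [hsw, ← Finset.sum_sub_distrib, ← Finset.sum_sub_distrib]
    refine Finset.sum_congr rfl fun i _ => ?_
    rw [← Finset.sum_sub_distrib, ← Finset.sum_sub_distrib]
    refine Finset.sum_congr rfl fun j _ => ?_
    ring
  have hV00 : ∀ m, V 0 m = V0 m := by
    intro m
    simp only [hVdef, zero_smul, sg_zero, hV0, hx]
  have g1 : HasDerivAt (fun t : ℂ => (1 + t * ip e a) / (1 - ip a a)) (ip e a / (1 - ip a a)) 0 := by
    simpa using (((hasDerivAt_id (0:ℂ)).mul_const (ip e a)).const_add 1).div_const (1 - ip a a)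
  have g2 := HasDerivAt.fun_sum (u := Finset.univ) fun m _ =>
    (hV' m).mul_const ((starRingEnd ℂ) (Tm a e m))
  have g3 := HasDerivAt.fun_sum (u := Finset.univ) fun m _ =>
    (hV' m).mul_const ((starRingEnd ℂ) (a m))
  have g4 := g1.fun_mul (g2.fun_add ((hasDerivAt_id (0:ℂ)).fun_mul g3))
  rw [hPhi]
  refine HasDerivAt.congr_deriv g4 ?_
  have k1 : ∑ m, (D m - 2 * ip e a * V0 m - 2 * ip w a * Sop (fun i j k => S i j k a) x L m)
      * (starRingEnd ℂ) (Tm a e m) = ip D (Tm a e) - 2 * ip e a * ip V0 (Tm a e)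
        - 2 * ip w a * ip (Sop (fun i j k => S i j k a) x L) (Tm a e) := by
    simp only [ip, Finset.mul_sum, ← Finset.sum_sub_distrib]
    refine Finset.sum_congr rfl fun m _ => ?_
    ring
  have k2 : ∑ m, V 0 m * (starRingEnd ℂ) (Tm a e m) = ip V0 (Tm a e) :=
    Finset.sum_congr rfl fun m _ => by rw [hV00]
  have k3 : ∑ m, V 0 m * (starRingEnd ℂ) (a m) = ip V0 a :=
    Finset.sum_congr rfl fun m _ => by rw [hV00]
  rw [k1, k2, k3]
  simp only [id, zero_mul, add_zero]
  ring

theorem Phi_diff {S : Fin n → Fin n → Fin n → (Fin n → ℂ) → ℂ}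
    {a : Fin n → ℂ} (ha : nsq a < 1)
    (hd : ∀ z, nsq z < 1 → ∀ i j k, DifferentiableAt ℂ (S i j k) z)
    (w e : Fin n → ℂ) (he : nsq e = 1) {t : ℂ} (ht : ‖t‖ < 1) :
    DifferentiableAt ℂ (Phi S a w e) t := by
  have hte : nsq (t • e) < 1 := by
    rw [nsq_smul, he]
    nlinarith [norm_nonneg t]
  have hden := den_ne hte ha
  set V : ℂ → Fin n → ℂ := fun t => Sop (fun i j k => S i j k (sg a (t • e)))
      (dsg a (t • e) w) (dsg a (t • e) w) with hVdef
  have hPhi : Phi S a w e = fun t => (1 + t * ip e a) / (1 - ip a a) *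
      ((∑ m, V t m * (starRingEnd ℂ) (Tm a e m)) + t * ∑ m, V t m * (starRingEnd ℂ) (a m)) :=
    funext fun t => Phi_eq S a w e he V (fun t => rfl) t
  have hy : DifferentiableAt ℂ (fun t : ℂ => sg a (t • e)) t :=
    differentiableAt_pi.2 fun i => hasDeriv_y a e i hden
  have hS : ∀ i j m, DifferentiableAt ℂ (fun t : ℂ => S i j m (sg a (t • e))) t := by
    intro i j m
    exact DifferentiableAt.comp t (hd _ (sg_mem ha hte) i j m) hy
  have hV : ∀ m, DifferentiableAt ℂ (fun t => V t m) t := by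
    intro m
    refine DifferentiableAt.fun_sum fun i _ => DifferentiableAt.fun_sum fun j _ => ?_
    exact ((hasDeriv_x a e w i hden).fun_mul (hS i j m)).fun_mul (hasDeriv_x a e w j hden)
  rw [hPhi]
  fun_prop

/-- The divergence bound. -/
theorem div_bound {S : Fin n → Fin n → Fin n → (Fin n → ℂ) → ℂ} {K : ℝ} (hK : 0 ≤ K)
    (hd : ∀ z, nsq z < 1 → ∀ i j k, DifferentiableAt ℂ (S i j k) z)
    (hb : ∀ z, nsq z < 1 → ∀ v, gm z (Sop (fun i j k => S i j k z) v v) ≤ K ^ 2 * gm z v ^ 2)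
    {a : Fin n → ℂ} (ha : nsq a < 1) (hs : ∀ i j k, S i j k a = S j i k a)
    (htr : ∀ i, ∑ k, S i k k a = 0) (ξ : Fin n → ℂ) :
    ‖(∑ k, ∑ i, ∑ j, ξ i * pd n k (S i j k) a * ξ j) +
      ((n : ℂ) - 1) * ip (Sop (fun i j k => S i j k a) ξ ξ) a / (1 - ip a a)‖
      ≤ n * (8 / 3 * K * gm a ξ) := by
  have h0 : nsq (0 : Fin n → ℂ) < 1 := by rw [nsq_zero]; norm_num
  have ha0 := one_sub_ne ha
  obtain ⟨w, hw, hwn⟩ : ∃ w, dsg a 0 w = ξ ∧ nsq w = gm a ξ :=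
    ⟨isg a 0 ξ, dsg_isg ha h0 ξ, (gm_eq_nsq ha ξ).symm⟩
  have hder : ∀ k : Fin n, ‖deriv (Phi S a w (Pi.single k 1)) 0‖ ≤ 8 / 3 * K * gm a ξ := by
    intro k
    have := Complex.norm_deriv_le_of_forall_mem_sphere_norm_le (c := 0) (R := 1 / 2)
      (C := 4 / 3 * K * nsq w) (f := Phi S a w (Pi.single k 1)) (by norm_num)
      (DifferentiableOn.diffContOnCl (fun t ht => by
        have ht' : t ∈ Metric.closedBall (0:ℂ) (1 / 2) := Metric.closure_ball_subset_closedBall ht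
        have ht2 : ‖t‖ ≤ 1 / 2 := by simpa using ht'
        exact (Phi_diff ha hd w _ (nsq_single k) (by linarith)).differentiableWithinAt))
      (fun t ht => Phi_bound hK hb ha w (nsq_single k) (mem_sphere_zero_iff_norm.mp ht))
    rw [hwn] at this
    linarith
  have key : (∑ k, ∑ i, ∑ j, ξ i * pd n k (S i j k) a * ξ j) +
      ((n : ℂ) - 1) * ip (Sop (fun i j k => S i j k a) ξ ξ) a / (1 - ip a a) =
      ∑ k, deriv (Phi S a w (Pi.single k 1)) 0 := by
    have e1 : ∀ k : Fin n, deriv (Phi S a w (Pi.single k 1)) 0 = _ :=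
      fun k => (Phi_deriv hs (hd a ha) w (Pi.single k 1) (nsq_single k)).deriv
    rw [Finset.sum_congr rfl fun k _ => e1 k, ← Finset.mul_sum, hw]
    simp only [Finset.sum_add_distrib, Finset.sum_sub_distrib, ← Finset.mul_sum, mul_assoc]
    rw [sum_ip_T ha]
    have t1 : ∑ k : Fin n, ip (fun m => ∑ i, ∑ j, ξ i * (fderiv ℂ (S i j m) a
        (dsg a 0 (Pi.single k 1)) * ξ j)) (Tm a (Pi.single k 1)) =
        (1 - ip a a) * ∑ k, ∑ i, ∑ j, ξ i * (pd n k (S i j k) a * ξ j) := by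
      have := trace_id ha (Matrix.of fun m l => ∑ i, ∑ j, ξ i * (pd n l (S i j m) a * ξ j))
      simp only [Matrix.trace, Matrix.diag, Matrix.of_apply] at this
      rw [← this]
      refine Finset.sum_congr rfl fun k _ => ?_
      congr 1
      funext m
      simp only [Matrix.mulVec, dotProduct, Matrix.of_apply, fderiv_eq_sum, Finset.sum_mul,
        Finset.mul_sum]
      rw [Finset.sum_comm' (t' := Finset.univ) (s' := fun _ => Finset.univ) (by simp)]
      conv_rhs => rw [Finset.sum_comm]
      rw [Finset.sum_comm]
      refine Finset.sum_congr rfl fun i _ => ?_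
      conv_rhs => rw [Finset.sum_comm]
      refine Finset.sum_congr rfl fun j _ => Finset.sum_congr rfl fun l _ => ?_
      ring
    have t2 : ∑ k : Fin n, ip (Sop (fun i j k => S i j k a) ξ (dsg a 0 (Pi.single k 1)))
        (Tm a (Pi.single k 1)) = 0 := by
      have := trace_id ha (Matrix.of fun m l => ∑ i, ξ i * S i l m a)
      simp only [Matrix.trace, Matrix.diag, Matrix.of_apply] at this
      rw [Finset.sum_comm] at this
      simp only [← Finset.mul_sum, htr, mul_zero, Finset.sum_const_zero] at this
      rw [← this]
      refine Finset.sum_congr rfl fun k _ => ?_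
      congr 1
      funext m
      simp only [Matrix.mulVec, dotProduct, Matrix.of_apply, Sop, Finset.sum_mul]
      rw [Finset.sum_comm]
    simp only [← Finset.mul_sum] at t1
    rw [t1, t2]
    simp only [Finset.sum_const, Finset.card_univ, Fintype.card_fin, nsmul_eq_mul]
    field_simp
    ring
  rw [key]
  calc _ ≤ ∑ k : Fin n, 8 / 3 * K * gm a ξ := norm_sum_le_of_le _ fun k _ => hder k
    _ = _ := by simp
end
end

noncomputable section

/-- Bilinear pairing. -/
def dt {n : ℕ} (o v : Fin n → ℂ) : ℂ := ∑ i, o i * v i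

/-- The gradient direction. -/
def eta {n : ℕ} (o z : Fin n → ℂ) : Fin n → ℂ :=
  fun i => (starRingEnd ℂ) (o i) + (starRingEnd ℂ) (1 - dt o z) * z i

/-- The quantity maximized (without the factor `1-|z|²`). -/
def Nn {n : ℕ} (o z : Fin n → ℂ) : ℝ := nsq o - ‖1 - dt o z‖ ^ 2

section
variable {n : ℕ}

theorem Nn_coe (o z : Fin n → ℂ) : ((Nn o z : ℝ) : ℂ) =
    ip o o - (1 - dt o z) * (starRingEnd ℂ) (1 - dt o z) := by
  unfold Nn
  rw [Complex.mul_conj, Complex.normSq_eq_norm_sq, ip_self]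
  push_cast; rfl

theorem dt_eta (o z : Fin n → ℂ) : dt o (eta o z) = Nn o z + (starRingEnd ℂ) (1 - dt o z) := by
  rw [Nn_coe]
  have : dt o (eta o z) = ip o o + (starRingEnd ℂ) (1 - dt o z) * dt o z := by
    unfold eta
    conv_lhs => unfold dt
    conv_rhs => rw [ip, dt, Finset.mul_sum]
    rw [← Finset.sum_add_distrib]
    exact Finset.sum_congr rfl fun i _ => by ring
  rw [this]; ring

theorem ip_eta_right (o z V : Fin n → ℂ) : ip V (eta o z) = dt o V + (1 - dt o z) * ip V z := by
  unfold eta ip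
  conv_rhs => rw [dt, Finset.mul_sum]
  rw [← Finset.sum_add_distrib]
  refine Finset.sum_congr rfl fun i _ => ?_
  simp only [map_add, map_mul, Complex.conj_conj]
  ring

theorem ip_z_eta (o z : Fin n → ℂ) : ip z (eta o z) = 1 - (1 - dt o z) * (1 - ip z z) := by
  rw [ip_eta_right]; ring

theorem ip_eta_z (o z : Fin n → ℂ) :
    ip (eta o z) z = 1 - (starRingEnd ℂ) (1 - dt o z) * (1 - ip z z) := by
  rw [← ip_conj, ip_z_eta]
  simp only [map_sub, map_mul, map_one, ip_conj]

theorem theta_eta {o z : Fin n → ℂ} (hz : nsq z < 1) :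
    dt o (eta o z) + ip (eta o z) z / (1 - ip z z) =
      (((1 + (1 - nsq z) * Nn o z) / (1 - nsq z) : ℝ) : ℂ) := by
  have h := one_sub_ne hz
  rw [dt_eta, ip_eta_z]
  push_cast
  rw [ip_self] at *
  field_simp
  ring

theorem g_ip {a : Fin n → ℂ} (ha : nsq a < 1) (U V : Fin n → ℂ) :
    ip (isg a 0 U) (isg a 0 V) = ip U V / (1 - ip a a) + ip U a * ip a V / (1 - ip a a) ^ 2 := by
  have h := one_sub_ne ha
  rw [isg_zero, isg_zero, ip_smul_left, ip_smul_right, Tm_ip ha]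
  have : (starRingEnd ℂ) (1 - ip a a)⁻¹ = (1 - ip a a)⁻¹ := by
    rw [map_inv₀, map_sub, ip_conj, map_one]
  rw [this]
  field_simp

theorem theta_eq {o z : Fin n → ℂ} (hz : nsq z < 1) (V : Fin n → ℂ) :
    dt o V + ip V z / (1 - ip z z) = (1 - ip z z) * ip (isg z 0 V) (isg z 0 (eta o z)) := by
  have h := one_sub_ne hz
  rw [g_ip hz, ip_z_eta, ip_eta_right]
  field_simp
  ring

theorem theta_bound {o z : Fin n → ℂ} (hz : nsq z < 1) (V : Fin n → ℂ) :
    ‖dt o V + ip V z / (1 - ip z z)‖ ^ 2 ≤ (1 - nsq z) ^ 2 * (gm z V * gm z (eta o z)) := by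
  rw [theta_eq hz, norm_mul, mul_pow, gm_eq_nsq hz V, gm_eq_nsq hz (eta o z)]
  have : ‖1 - ip z z‖ ^ 2 = (1 - nsq z) ^ 2 := by
    rw [ip_self]
    have : (1 - (nsq z : ℂ)) = ((1 - nsq z : ℝ) : ℂ) := by push_cast; rfl
    rw [this, Complex.norm_real, Real.norm_eq_abs, sq_abs]
  rw [this]
  gcongr
  exact cs _ _

theorem gm_eta {o z : Fin n → ℂ} (hz : nsq z < 1) :
    gm z (eta o z) = (1 + (1 - nsq z) * Nn o z) / (1 - nsq z) ^ 2 := by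
  have h := one_sub_ne hz
  have h1 := theta_eta (o := o) hz
  rw [theta_eq hz, ip_self, ip_self, ← gm_eq_nsq hz] at h1
  have hs : 1 - nsq z ≠ 0 := by linarith
  have h2 : (1 - nsq z) * gm z (eta o z) = (1 + (1 - nsq z) * Nn o z) / (1 - nsq z) := by
    exact_mod_cast h1
  field_simp
  field_simp at h2
  linarith

/-- Derivative of the squared modulus along a real line. -/
theorem hasDerivAt_normsq {f : ℝ → ℂ} {f' : ℂ} {x : ℝ} (h : HasDerivAt f f' x) :
    HasDerivAt (fun t => ‖f t‖ ^ 2) (2 * (f' * (starRingEnd ℂ) (f x)).re) x := by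
  have := h.norm_sq
  refine this.congr_deriv ?_
  congr 1

/-- The critical point equation. -/
theorem crit_deriv {o : Fin n → (Fin n → ℂ) → ℂ} {z : Fin n → ℂ}
    (hd : ∀ j, DifferentiableAt ℂ (o j) z) (P : Fin n → Fin n → ℂ)
    (hP : ∀ i j, pd n i (o j) z = - o i z * o j z + P i j) (η : Fin n → ℂ) :
    HasDerivAt (fun t : ℝ => (1 - nsq (z + (t : ℂ) • η)) *
        Nn (fun j => o j (z + (t : ℂ) • η)) (z + (t : ℂ) • η))
      (-(2 * (ip η z).re) * Nn (fun j => o j z) z + (1 - nsq z) *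
        (2 * (- dt (fun j => o j z) η * Nn (fun j => o j z) z +
          ∑ l, ∑ j, η l * P l j * eta (fun j => o j z) z j).re)) 0 := by
  have hzl : HasDerivAt (fun t : ℂ => z + t • η) η 0 := by
    simpa using ((hasDerivAt_id (0:ℂ)).smul_const η).const_add z
  have hz1 : ∀ i, HasDerivAt (fun t : ℝ => (z + (t : ℂ) • η) i) (η i) 0 := by
    intro i
    have h1 : HasDerivAt (fun t : ℂ => (z + t • η) i) (η i) ((0 : ℝ) : ℂ) := by
      simpa using hasDerivAt_pi.1 hzl i
    exact h1.comp_ofReal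
  set D : Fin n → ℂ := fun j => ∑ l, η l * pd n l (o j) z with hD
  have ho1 : ∀ j, HasDerivAt (fun t : ℝ => o j (z + (t : ℂ) • η)) (D j) 0 := by
    intro j
    have h0 : z + (0 : ℂ) • η = z := by simp
    have h1 : HasFDerivAt (o j) (fderiv ℂ (o j) z) (z + (0 : ℂ) • η) := by
      rw [h0]; exact (hd j).hasFDerivAt
    have h2 := h1.comp_hasDerivAt (0 : ℂ) hzl
    rw [fderiv_eq_sum] at h2
    have h3 : HasDerivAt (fun t : ℂ => o j (z + t • η)) (D j) ((0 : ℝ) : ℂ) := by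
      rw [Complex.ofReal_zero]; exact h2
    exact h3.comp_ofReal
  have hn : HasDerivAt (fun t : ℝ => nsq (z + (t : ℂ) • η)) (2 * (ip η z).re) 0 := by
    have := HasDerivAt.fun_sum (u := Finset.univ) fun i _ => hasDerivAt_normsq (hz1 i)
    refine this.congr_deriv ?_
    simp [ip, Finset.mul_sum]
  have hno : HasDerivAt (fun t : ℝ => nsq (fun j => o j (z + (t : ℂ) • η)))
      (2 * (ip D (fun j => o j z)).re) 0 := by
    have := HasDerivAt.fun_sum (u := Finset.univ) fun i _ => hasDerivAt_normsq (ho1 i)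
    refine this.congr_deriv ?_
    simp [ip, Finset.mul_sum]
  have hc : HasDerivAt (fun t : ℝ => 1 - dt (fun j => o j (z + (t : ℂ) • η)) (z + (t : ℂ) • η))
      (-(dt D z + dt (fun j => o j z) η)) 0 := by
    have := (HasDerivAt.fun_sum (u := Finset.univ) fun i _ => (ho1 i).fun_mul (hz1 i)).const_sub 1
    refine this.congr_deriv ?_
    simp [dt, Finset.sum_add_distrib]
  have hfin := (hn.const_sub 1).fun_mul (hno.fun_sub (hasDerivAt_normsq hc))
  refine hfin.congr_deriv ?_
  simp only [Complex.ofReal_zero, zero_smul, add_zero]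
  have hNn : nsq (fun j => o j z) - ‖1 - dt (fun j => o j z) z‖ ^ 2 = Nn (fun j => o j z) z := rfl
  rw [hNn]
  congr 2
  rw [← mul_sub, ← Complex.sub_re]
  congr 2
  have hDj : ∀ j, D j = - dt (fun j => o j z) η * o j z + ∑ l, η l * P l j := by
    intro j
    simp only [hD, hP, dt, neg_mul, Finset.sum_mul]
    rw [← Finset.sum_neg_distrib, ← Finset.sum_add_distrib]
    exact Finset.sum_congr rfl fun l _ => by ring
  have k1 : ip D (fun j => o j z) = - dt (fun j => o j z) η * ip (fun j => o j z) (fun j => o j z)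
      + ∑ l, ∑ j, η l * P l j * (starRingEnd ℂ) (o j z) := by
    rw [Finset.sum_comm]
    simp only [ip, hDj, Finset.mul_sum, ← Finset.sum_add_distrib]
    refine Finset.sum_congr rfl fun j _ => ?_
    rw [← Finset.sum_mul]; ring
  have k2 : dt D z = - dt (fun j => o j z) η * dt (fun j => o j z) z
      + ∑ l, ∑ j, η l * P l j * z j := by
    rw [Finset.sum_comm]
    conv_lhs => unfold dt
    conv_rhs => enter [1]; rw [dt, dt]
    simp only [hDj, Finset.mul_sum, ← Finset.sum_add_distrib]
    refine Finset.sum_congr rfl fun j _ => ?_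
    rw [← Finset.sum_mul]; unfold dt; ring
  have k3 : ∑ l, ∑ j, η l * P l j * eta (fun j => o j z) z j =
      (∑ l, ∑ j, η l * P l j * (starRingEnd ℂ) (o j z)) +
      (starRingEnd ℂ) (1 - dt (fun j => o j z) z) * ∑ l, ∑ j, η l * P l j * z j := by
    simp only [Finset.mul_sum, ← Finset.sum_add_distrib, eta]
    exact Finset.sum_congr rfl fun l _ => Finset.sum_congr rfl fun j _ => by ring
  rw [k1, k2, k3, Nn_coe]
  ring
end
end

noncomputable section
section
variable {n : ℕ}

theorem P_sum (S : Fin n → Fin n → Fin n → (Fin n → ℂ) → ℂ) (z o η : Fin n → ℂ) (c : ℂ)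
    (hs : ∀ i j k, S i j k z = S j i k z) :
    ∑ l, ∑ j, η l * ((∑ k, S l j k z * o k) + c * ((∑ k, ∑ m, S l m k z * S k j m z)
      - ∑ k, pd n k (S l j k) z)) * η j =
    dt o (Sop (fun i j k => S i j k z) η η) + c * ((∑ k, ∑ m, (∑ i, η i * S i m k z) *
      (∑ i, η i * S i k m z)) - ∑ k, ∑ i, ∑ j, η i * pd n k (S i j k) z * η j) := by
  have e1 : dt o (Sop (fun i j k => S i j k z) η η) =
      ∑ l, ∑ j, η l * (∑ k, S l j k z * o k) * η j := by
    simp only [dt, Sop, Finset.mul_sum, Finset.sum_mul]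
    rw [Finset.sum_comm]
    refine Finset.sum_congr rfl fun l _ => ?_
    rw [Finset.sum_comm]
    exact Finset.sum_congr rfl fun j _ => Finset.sum_congr rfl fun k _ => by ring
  have e2 : ∑ k, ∑ m, (∑ i, η i * S i m k z) * (∑ i, η i * S i k m z) =
      ∑ l, ∑ j, η l * (∑ k, ∑ m, S l m k z * S k j m z) * η j := by
    have a1 : ∀ k m, (∑ i, η i * S i m k z) * (∑ i, η i * S i k m z) =
        ∑ l, ∑ j, η l * (S l m k z * S k j m z) * η j := by
      intro k m
      rw [Finset.sum_mul_sum]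
      refine Finset.sum_congr rfl fun l _ => Finset.sum_congr rfl fun j _ => ?_
      rw [hs j k m]; ring
    simp only [a1]
    calc ∑ k, ∑ m, ∑ l, ∑ j, η l * (S l m k z * S k j m z) * η j
        = ∑ k, ∑ l, ∑ m, ∑ j, η l * (S l m k z * S k j m z) * η j :=
          Finset.sum_congr rfl fun k _ => Finset.sum_comm
      _ = ∑ l, ∑ k, ∑ m, ∑ j, η l * (S l m k z * S k j m z) * η j := Finset.sum_comm
      _ = ∑ l, ∑ k, ∑ j, ∑ m, η l * (S l m k z * S k j m z) * η j :=
          Finset.sum_congr rfl fun l _ => Finset.sum_congr rfl fun k _ => Finset.sum_comm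
      _ = ∑ l, ∑ j, ∑ k, ∑ m, η l * (S l m k z * S k j m z) * η j :=
          Finset.sum_congr rfl fun l _ => Finset.sum_comm
      _ = _ := by simp only [Finset.mul_sum, Finset.sum_mul]
  have e3 : ∑ k, ∑ i, ∑ j, η i * pd n k (S i j k) z * η j =
      ∑ l, ∑ j, η l * (∑ k, pd n k (S l j k) z) * η j := by
    simp only [Finset.mul_sum, Finset.sum_mul]
    rw [Finset.sum_comm]
    exact Finset.sum_congr rfl fun l _ => Finset.sum_comm
  have gen : ∀ p q r : Fin n → Fin n → ℂ, ∑ l, ∑ j, η l * (p l j + c * (q l j - r l j)) * η j =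
      (∑ l, ∑ j, η l * p l j * η j) +
        c * ((∑ l, ∑ j, η l * q l j * η j) - ∑ l, ∑ j, η l * r l j * η j) := by
    intro p q r
    simp only [← Finset.sum_sub_distrib, Finset.mul_sum, ← Finset.sum_add_distrib]
    exact Finset.sum_congr rfl fun l _ => Finset.sum_congr rfl fun j _ => by ring
  rw [e1, e2, e3]
  exact gen (fun l j => ∑ k, S l j k z * o k) (fun l j => ∑ k, ∑ m, S l m k z * S k j m z)
    (fun l j => ∑ k, pd n k (S l j k) z)

/-- Estimate at an interior critical point. -/
theorem crit_est (hn : 2 ≤ n) {S : Fin n → Fin n → Fin n → (Fin n → ℂ) → ℂ}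
    {o : Fin n → (Fin n → ℂ) → ℂ} {K : ℝ} (hK : 0 ≤ K)
    (hd : ∀ z, nsq z < 1 → ∀ i j k, DifferentiableAt ℂ (S i j k) z)
    (hb : ∀ z, nsq z < 1 → ∀ v, gm z (Sop (fun i j k => S i j k z) v v) ≤ K ^ 2 * gm z v ^ 2)
    {z : Fin n → ℂ} (hz : nsq z < 1) (hs : ∀ i j k, S i j k z = S j i k z)
    (htr : ∀ i, ∑ k, S i k k z = 0) (ho : ∀ j, DifferentiableAt ℂ (o j) z)
    (hstr : ∀ i j, pd n i (o j) z = - o i z * o j z + ((∑ k, S i j k z * o k z) +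
      (1 / ((n : ℂ) - 1)) * ((∑ k, ∑ m, S i m k z * S k j m z) - ∑ k, pd n k (S i j k) z)))
    (hmax : ∀ x, nsq x < 1 → (1 - nsq x) * Nn (fun j => o j x) x ≤
      (1 - nsq z) * Nn (fun j => o j z) z)
    {A : ℝ} (hA : 0 < A) (hA2 : A ^ 2 = 1 + (1 - nsq z) * Nn (fun j => o j z) z) :
    A ^ 2 - 1 ≤ K * A + (n * K ^ 2 + n * (8 / 3 * K)) / ((n : ℝ) - 1) := by
  set ov : Fin n → ℂ := fun j => o j z with hov
  set η := eta ov z with hη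
  set s := 1 - nsq z with hsdef
  have hs0 : 0 < s := by rw [hsdef]; linarith
  have hcrit := crit_deriv ho _ hstr η
  have hloc : IsLocalMax (fun t : ℝ => (1 - nsq (z + (t : ℂ) • η)) *
        Nn (fun j => o j (z + (t : ℂ) • η)) (z + (t : ℂ) • η)) 0 := by
    have hcont : Continuous fun t : ℝ => nsq (z + (t : ℂ) • η) := by
      unfold nsq
      simp only [Pi.add_apply, Pi.smul_apply, smul_eq_mul]
      fun_prop
    have hev : ∀ᶠ t : ℝ in nhds 0, nsq (z + (t : ℂ) • η) < 1 := by
      have := hcont.continuousAt (x := 0)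
      refine this.eventually_lt_const ?_
      simpa using hz
    filter_upwards [hev] with t ht
    have := hmax _ ht
    simpa using this
  have h0 := hloc.hasDerivAt_eq_zero hcrit
  rw [← hov, P_sum S z ov η _ hs] at h0
  set V := Sop (fun i j k => S i j k z) η η with hV
  set tr := ∑ k, ∑ m, (∑ i, η i * S i m k z) * (∑ i, η i * S i k m z) with htrd
  set dv := ∑ k, ∑ i, ∑ j, η i * pd n k (S i j k) z * η j with hdvd
  set m := gm z η with hm
  have hmA : m = A ^ 2 / s ^ 2 := by rw [hm, hη, gm_eta hz, hA2]
  have hm0 : 0 < m := by rw [hmA]; positivity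
  have b1 : ‖tr‖ ≤ n * K ^ 2 * m := tr_bound hs hz hK (hb z hz) η hm0
  have b2 := div_bound hK hd hb hz hs htr η
  rw [← hV, ← hdvd, ← hm] at b2
  set Dv := dv + ((n : ℂ) - 1) * ip V z / (1 - ip z z) with hDv
  have b3 := theta_bound (o := ov) hz V
  rw [← hη, ← hm, ← hsdef] at b3
  set θ := dt ov V + ip V z / (1 - ip z z) with hθ
  have b4 : gm z V ≤ K ^ 2 * m ^ 2 := hb z hz η
  have hsm : s ^ 2 * m = A ^ 2 := by rw [hmA]; field_simp
  have b5 : ‖θ‖ ≤ K * A * m := by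
    refine abs_le_of_sq_le_sq' ?_ (by positivity) |>.2
    calc ‖θ‖ ^ 2 ≤ s ^ 2 * (gm z V * m) := b3
      _ ≤ s ^ 2 * (K ^ 2 * m ^ 2 * m) := by gcongr
      _ = K ^ 2 * m ^ 2 * (s ^ 2 * m) := by ring
      _ = _ := by rw [hsm]; ring
  have hn1 : (0 : ℝ) < (n : ℝ) - 1 := by
    have : (2 : ℝ) ≤ n := by exact_mod_cast hn
    linarith
  have hn1c : (n : ℂ) - 1 ≠ 0 := by
    have : (((n : ℝ) - 1 : ℝ) : ℂ) ≠ 0 := by exact_mod_cast hn1.ne'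
    simpa using this
  have hP : dt ov V + 1 / ((n : ℂ) - 1) * (tr - dv) = θ + 1 / ((n : ℂ) - 1) * (tr - Dv) := by
    have := one_sub_ne hz
    rw [hθ, hDv]
    field_simp
    ring
  rw [hP] at h0
  set Q := θ + 1 / ((n : ℂ) - 1) * (tr - Dv) with hQ
  have hnorm : ‖(1 / ((n : ℂ) - 1))‖ = 1 / ((n : ℝ) - 1) := by
    have : (1 / ((n : ℂ) - 1)) = ((1 / ((n : ℝ) - 1) : ℝ) : ℂ) := by push_cast; rfl
    rw [this, Complex.norm_real, Real.norm_eq_abs, abs_of_pos (by positivity)]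
  have bQ : ‖Q‖ ≤ K * A * m + 1 / ((n : ℝ) - 1) * (n * K ^ 2 * m + n * (8 / 3 * K * m)) := by
    rw [hQ]
    refine (norm_add_le _ _).trans (add_le_add b5 ?_)
    rw [norm_mul, hnorm]
    gcongr
    exact (norm_sub_le _ _).trans (add_le_add b1 b2)
  have hth := congrArg Complex.re (theta_eta (o := ov) hz)
  rw [← hη, ← hsdef, Complex.ofReal_re, Complex.add_re, ← hA2] at hth
  have hipre : (ip η z / (1 - ip z z)).re = (ip η z).re / s := by
    rw [ip_self]
    have : (1 - (nsq z : ℂ)) = ((s : ℝ) : ℂ) := by rw [hsdef]; push_cast; rfl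
    rw [this, Complex.div_ofReal_re]
  rw [hipre] at hth
  rw [Complex.add_re, Complex.re_mul_ofReal, Complex.neg_re] at h0
  set N := Nn ov z with hN
  have hsN : s * N = A ^ 2 - 1 := by linarith
  have hQre : Q.re = N * (A ^ 2 / s) := by
    rw [← hth]
    field_simp
    linarith
  have h5 : N * (A ^ 2 / s) = (A ^ 2 - 1) * m := by
    rw [← hsN, hmA]; field_simp
  have h6 : (A ^ 2 - 1) * m ≤
      (K * A + (n * K ^ 2 + n * (8 / 3 * K)) / ((n : ℝ) - 1)) * m := by
    rw [← h5, ← hQre]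
    refine ((Complex.re_le_norm _).trans bQ).trans (le_of_eq ?_)
    ring
  exact le_of_mul_le_mul_right h6 hm0

/-- The abstract bound. -/
theorem abstract_bound (hn : 2 ≤ n) {S : Fin n → Fin n → Fin n → (Fin n → ℂ) → ℂ}
    {o : Fin n → (Fin n → ℂ) → ℂ} {K : ℝ} (hK : 0 ≤ K)
    (hd : ∀ z, nsq z < 1 → ∀ i j k, DifferentiableAt ℂ (S i j k) z)
    (hb : ∀ z, nsq z < 1 → ∀ v, gm z (Sop (fun i j k => S i j k z) v v) ≤ K ^ 2 * gm z v ^ 2)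
    (hs : ∀ z, nsq z < 1 → ∀ i j k, S i j k z = S j i k z)
    (htr : ∀ z, nsq z < 1 → ∀ i, ∑ k, S i k k z = 0)
    (ho : ∀ z, nsq z ≤ 1 → ∀ j, DifferentiableAt ℂ (o j) z)
    (hstr : ∀ z, nsq z < 1 → ∀ i j, pd n i (o j) z = - o i z * o j z + ((∑ k, S i j k z * o k z) +
      (1 / ((n : ℂ) - 1)) * ((∑ k, ∑ m, S i m k z * S k j m z) - ∑ k, pd n k (S i j k) z))) :
    nsq (fun j => o j 0) ≤ (K / 2 + Real.sqrt (1 + K ^ 2 / 4 +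
      (n * K ^ 2 + n * (8 / 3 * K)) / ((n : ℝ) - 1))) ^ 2 := by
  set C := (n * K ^ 2 + n * (8 / 3 * K)) / ((n : ℝ) - 1) with hC
  have hn1 : (0 : ℝ) < (n : ℝ) - 1 := by
    have : (2 : ℝ) ≤ n := by exact_mod_cast hn
    linarith
  have hC0 : 0 ≤ C := by positivity
  set R := K / 2 + Real.sqrt (1 + K ^ 2 / 4 + C) with hR
  have hsq : Real.sqrt (1 + K ^ 2 / 4 + C) ^ 2 = 1 + K ^ 2 / 4 + C := Real.sq_sqrt (by positivity)
  have hsq0 := Real.sqrt_nonneg (1 + K ^ 2 / 4 + C)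
  have hR1 : 1 ≤ R ^ 2 := by
    rw [hR]; nlinarith [mul_nonneg hK hsq0]
  set B : (Fin n → ℂ) → ℝ := fun x => (1 - nsq x) * Nn (fun j => o j x) x with hB
  have hB0 : B 0 = nsq (fun j => o j 0) - 1 := by
    simp [hB, nsq_zero, Nn, dt]
  have hcomp : IsCompact {x : Fin n → ℂ | nsq x ≤ 1} := by
    refine Metric.isCompact_of_isClosed_isBounded ?_ ?_
    · refine isClosed_le ?_ continuous_const
      unfold nsq; fun_prop
    · refine (Metric.isBounded_closedBall (x := (0 : Fin n → ℂ)) (r := 1)).subset ?_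
      intro x hx
      rw [mem_closedBall_zero_iff, pi_norm_le_iff_of_nonneg zero_le_one]
      intro i
      have h1 : ‖x i‖ ^ 2 ≤ nsq x :=
        Finset.single_le_sum (f := fun i => ‖x i‖ ^ 2) (fun _ _ => sq_nonneg _) (Finset.mem_univ i)
      have h2 : nsq x ≤ 1 := hx
      nlinarith [norm_nonneg (x i)]
  have hcontB : ContinuousOn B {x : Fin n → ℂ | nsq x ≤ 1} := by
    intro x hx
    have h1 : ∀ j, ContinuousAt (o j) x := fun j => (ho x hx j).continuousAt
    refine ContinuousAt.continuousWithinAt ?_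
    have c1 : ContinuousAt (fun y : Fin n → ℂ => nsq y) x := by
      refine tendsto_finsetSum _ fun i _ => ?_
      exact ((continuous_apply i).norm.pow 2).continuousAt
    have c2 : ContinuousAt (fun y : Fin n → ℂ => nsq (fun j => o j y)) x := by
      refine tendsto_finsetSum _ fun i _ => ?_
      exact ((h1 i).norm.pow 2)
    have c3 : ContinuousAt (fun y : Fin n → ℂ => dt (fun j => o j y) y) x := by
      refine tendsto_finsetSum _ fun i _ => ?_
      exact (h1 i).mul (continuous_apply i).continuousAt
    simp only [hB, Nn]
    fun_prop
  obtain ⟨z, hz, hmax⟩ := hcomp.exists_isMaxOn ⟨0, by simp [nsq_zero]⟩ hcontB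
  have h0z : B 0 ≤ B z := hmax (show nsq (0 : Fin n → ℂ) ≤ 1 by simp [nsq_zero])
  by_cases hz1 : B z ≤ 0
  · linarith
  push Not at hz1
  have hzlt : nsq z < 1 := by
    refine lt_of_le_of_ne hz fun h => ?_
    simp [hB, h] at hz1
  set A := Real.sqrt (1 + B z) with hA
  have hA2 : A ^ 2 = 1 + B z := Real.sq_sqrt (by linarith)
  have hApos : 0 < A := Real.sqrt_pos.2 (by linarith)
  have hest := crit_est hn hK hd hb hzlt (hs z hzlt) (htr z hzlt) (ho z hz) (hstr z hzlt)
    (fun x hx => hmax (show nsq x ≤ 1 from hx.le)) hApos hA2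
  rw [← hC] at hest
  have hAR : A ≤ R := by
    have h1 : (A - K / 2) ^ 2 ≤ 1 + K ^ 2 / 4 + C := by nlinarith
    have := Real.abs_le_sqrt h1
    have := (abs_le.1 this).2
    rw [hR]; linarith
  have : A ^ 2 ≤ R ^ 2 := by gcongr
  linarith
end
end

section
variable {n : ℕ}

theorem euclNorm_sq (z : Fin n → ℂ) : euclNorm n z ^ 2 = nsq z := Real.sq_sqrt (nsq_nonneg z)

theorem mem_eball_iff (z : Fin n → ℂ) : z ∈ eball n ↔ nsq z < 1 := by
  change Real.sqrt (nsq z) < 1 ↔ _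
  rw [Real.sqrt_lt' one_pos, one_pow]

theorem bergSq_eq {z : Fin n → ℂ} (hz : nsq z < 1) (v : Fin n → ℂ) :
    bergSq n z v = ((n : ℝ) + 1) * gm z v := by
  unfold bergSq
  rw [euclNorm_sq]
  have hs := one_sub_ne hz
  have key : (∑ i, ∑ j, (((n : ℂ) + 1) / (((1 - nsq z : ℝ) : ℂ)) ^ 2) *
      ((if i = j then ((1 - nsq z : ℝ) : ℂ) else 0)
        + (starRingEnd ℂ) (z i) * z j) * v i * (starRingEnd ℂ) (v j)) =
      ((((n : ℝ) + 1) * gm z v : ℝ) : ℂ) := by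
    push_cast
    rw [gm_coe, ← ip_self]
    have e1 : ip v z * ip z v = ∑ i, ∑ j, (v i * (starRingEnd ℂ) (z i)) * (z j * (starRingEnd ℂ) (v j)) := by
      unfold ip; rw [Finset.sum_mul_sum]
    have e2 : ip v v * (1 - ip z z) = ∑ i, ∑ j, (if i = j then (1 - ip z z) else 0) * v i
        * (starRingEnd ℂ) (v j) := by
      simp only [ite_mul, zero_mul, Finset.sum_ite_eq, Finset.mem_univ, if_true]
      rw [ip, Finset.sum_mul]
      exact Finset.sum_congr rfl fun i _ => by ring
    have e3 : ((n : ℂ) + 1) * (ip v v / (1 - ip z z) + ip v z * ip z v / (1 - ip z z) ^ 2) =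
        (((n : ℂ) + 1) / (1 - ip z z) ^ 2) * (ip v v * (1 - ip z z) + ip v z * ip z v) := by
      field_simp
    rw [e3, e1, e2, ← Finset.sum_add_distrib, Finset.mul_sum]
    refine Finset.sum_congr rfl fun i _ => ?_
    rw [← Finset.sum_add_distrib, Finset.mul_sum]
    refine Finset.sum_congr rfl fun j _ => ?_
    ring
  rw [key, Complex.ofReal_re]

theorem eq_zero_of_gm {z v : Fin n → ℂ} (hz : nsq z < 1) (h : gm z v = 0) : v = 0 := by
  have h1 : nsq v = 0 := by
    have hs : 0 < 1 - nsq z := by linarith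
    have a1 : 0 ≤ nsq v / (1 - nsq z) := div_nonneg (nsq_nonneg v) hs.le
    have a2 : 0 ≤ ‖ip v z‖ ^ 2 / (1 - nsq z) ^ 2 := by positivity
    unfold gm at h
    have a3 : nsq v / (1 - nsq z) = 0 := by linarith
    rcases div_eq_zero_iff.1 a3 with h | h
    · exact h
    · linarith
  funext i
  have := (Finset.sum_eq_zero_iff_of_nonneg (fun i _ => sq_nonneg ‖v i‖)).1 h1 i (Finset.mem_univ i)
  simpa using this

theorem Sop_smul (S : Fin n → Fin n → Fin n → ℂ) (c : ℂ) (v : Fin n → ℂ) :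
    Sop S (c • v) (c • v) = (c ^ 2) • Sop S v v := by
  funext k
  simp only [Sop, Pi.smul_apply, smul_eq_mul, Finset.mul_sum]
  exact Finset.sum_congr rfl fun i _ => Finset.sum_congr rfl fun j _ => by ring

theorem memF_bound {α : ℝ} (hα : 0 ≤ α) {F : (Fin n → ℂ) → (Fin n → ℂ)} (hF : memF n α F)
    {z : Fin n → ℂ} (hz : nsq z < 1) (v : Fin n → ℂ) :
    gm z (Sop (fun i j k => oSchw n F i j k z) v v) ≤
      (Real.sqrt ((n : ℝ) + 1) * α) ^ 2 * gm z v ^ 2 := by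
  set S := (fun i j k => oSchw n F i j k z) with hS
  have hn0 : (0 : ℝ) < (n : ℝ) + 1 := by positivity
  rw [mul_pow, Real.sq_sqrt hn0.le]
  rcases (gm_nonneg hz v).eq_or_lt with h | h
  · have hv := eq_zero_of_gm hz h.symm
    have e : Sop S v v = 0 := by
      funext k; simp [Sop, hv]
    rw [e]
    have : gm z (0 : Fin n → ℂ) = 0 := by simp [gm, nsq_zero, ip_zero_left]
    rw [this]; positivity
  set b := ((n : ℝ) + 1) * gm z v with hb
  have hb0 : 0 < b := by positivity
  set c : ℂ := (((Real.sqrt b)⁻¹ : ℝ) : ℂ) with hc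
  have hcn : ‖c‖ ^ 2 = b⁻¹ := by
    rw [hc, Complex.norm_real, Real.norm_eq_abs, sq_abs, inv_pow, Real.sq_sqrt hb0.le]
  have h1 : bergSq n z (c • v) = 1 := by
    rw [bergSq_eq hz, gm_smul, hcn]
    have : ((n : ℝ) + 1) * (b⁻¹ * gm z v) = b⁻¹ * b := by rw [hb]; ring
    rw [this, inv_mul_cancel₀ hb0.ne']
  have h2 := hF.2.2.2.2 z ((mem_eball_iff z).2 hz) (c • v) h1
  rw [Real.sqrt_le_left hα, bergSq_eq hz] at h2
  have e : SchwOp n F z (c • v) = (c ^ 2) • Sop S v v := Sop_smul S c v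
  rw [e, gm_smul, norm_pow] at h2
  have h3 : (‖c‖ ^ 2) ^ 2 * ((n + 1) * gm z (Sop S v v)) ≤ α ^ 2 := by
    calc _ = ((n : ℝ) + 1) * ((‖c‖ ^ 2) ^ 2 * gm z (Sop S v v)) := by ring
      _ ≤ _ := h2
  rw [hcn, inv_pow, inv_mul_le_iff₀ (by positivity)] at h3
  have h4 : ((n : ℝ) + 1) * gm z (Sop S v v) ≤ ((n : ℝ) + 1) * ((n + 1) * α ^ 2 * gm z v ^ 2) := by
    refine h3.trans (le_of_eq ?_)
    rw [hb]; ring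
  exact le_of_mul_le_mul_left h4 hn0

theorem pd_dil {f : (Fin n → ℂ) → ℂ} {z : Fin n → ℂ} (r : ℂ) (hf : DifferentiableAt ℂ f (r • z)) :
    DifferentiableAt ℂ (fun x => r * f (r • x)) z ∧
    ∀ i, pd n i (fun x => r * f (r • x)) z = r ^ 2 * pd n i f (r • z) := by
  have h1 : HasFDerivAt (fun x : Fin n → ℂ => r • x) (r • ContinuousLinearMap.id ℂ (Fin n → ℂ)) z :=
    (hasFDerivAt_id z).const_smul r
  have h2 := (hf.hasFDerivAt.comp z h1).const_mul r
  refine ⟨h2.differentiableAt, fun i => ?_⟩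
  have h3 : fderiv ℂ (fun x => r * f (r • x)) z = _ := h2.fderiv
  unfold pd
  rw [h3]
  simp
  ring

theorem gm_dil {r : ℝ} (hr0 : 0 < r) (hr1 : r < 1) {z : Fin n → ℂ} (hz : nsq z < 1) {K : ℝ}
    {V v : Fin n → ℂ} (h : gm ((r : ℂ) • z) V ≤ K ^ 2 * gm ((r : ℂ) • z) v ^ 2) :
    gm z ((r : ℂ) • V) ≤ K ^ 2 * gm z v ^ 2 := by
  have hx := nsq_nonneg z
  have hr2 : r ^ 2 < 1 := by nlinarith
  set p := 1 - nsq z with hp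
  set q := 1 - r ^ 2 * nsq z with hq
  have hp0 : 0 < p := by rw [hp]; linarith
  have hpq : p ≤ q := by rw [hp, hq]; nlinarith
  have hq0 : 0 < q := by linarith
  have hrp : r ^ 2 * p ≤ q := by nlinarith
  have hgr : ∀ u, gm ((r : ℂ) • z) u = nsq u / q + r ^ 2 * ‖ip u z‖ ^ 2 / q ^ 2 := by
    intro u
    unfold gm
    rw [nsq_smul, ip_smul_right, norm_mul, RCLike.norm_conj, Complex.norm_real, Real.norm_eq_abs,
      sq_abs, mul_pow, sq_abs]
  have hg : ∀ u, gm z u = nsq u / p + ‖ip u z‖ ^ 2 / p ^ 2 := fun u => rfl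
  have hzr : nsq ((r : ℂ) • z) < 1 := by
    rw [nsq_smul, Complex.norm_real, Real.norm_eq_abs, sq_abs]; nlinarith
  have c1 : gm ((r : ℂ) • z) v ≤ p / q * gm z v := by
    rw [hgr, hg]
    have : p / q * (nsq v / p + ‖ip v z‖ ^ 2 / p ^ 2) -
        (nsq v / q + r ^ 2 * ‖ip v z‖ ^ 2 / q ^ 2) = ‖ip v z‖ ^ 2 * (q - r ^ 2 * p) / (p * q ^ 2) := by
      field_simp
      ring
    have h2 : 0 ≤ ‖ip v z‖ ^ 2 * (q - r ^ 2 * p) / (p * q ^ 2) :=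
      div_nonneg (mul_nonneg (sq_nonneg _) (by linarith)) (by positivity)
    linarith
  have c2 : r ^ 2 * gm z V ≤ (q / p) ^ 2 * gm ((r : ℂ) • z) V := by
    rw [hgr, hg]
    have : (q / p) ^ 2 * (nsq V / q + r ^ 2 * ‖ip V z‖ ^ 2 / q ^ 2) -
        r ^ 2 * (nsq V / p + ‖ip V z‖ ^ 2 / p ^ 2) = nsq V * (q - r ^ 2 * p) / p ^ 2 := by
      field_simp
      ring
    have h2 : 0 ≤ nsq V * (q - r ^ 2 * p) / p ^ 2 :=
      div_nonneg (mul_nonneg (nsq_nonneg _) (by linarith)) (by positivity)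
    linarith
  rw [gm_smul, Complex.norm_real, Real.norm_eq_abs, sq_abs]
  have g0 := gm_nonneg hzr v
  calc r ^ 2 * gm z V ≤ (q / p) ^ 2 * gm ((r : ℂ) • z) V := c2
    _ ≤ (q / p) ^ 2 * (K ^ 2 * gm ((r : ℂ) • z) v ^ 2) := by gcongr
    _ ≤ (q / p) ^ 2 * (K ^ 2 * (p / q * gm z v) ^ 2) := by gcongr
    _ = K ^ 2 * gm z v ^ 2 := by field_simp

theorem om_bound (hn : 2 ≤ n) {α : ℝ} (hα : 0 ≤ α) {F : (Fin n → ℂ) → (Fin n → ℂ)}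
    (hF : memF n α F) {K : ℝ} (hK : K = Real.sqrt ((n : ℝ) + 1) * α) :
    nsq (fun j => om n F j 0) ≤ (K / 2 + Real.sqrt (1 + K ^ 2 / 4 +
      (n * K ^ 2 + n * (8 / 3 * K)) / ((n : ℝ) - 1))) ^ 2 := by
  have hK0 : 0 ≤ K := by rw [hK]; positivity
  have hU := isOpen_eball n
  have hdF := hF.1
  have hJ := hF.2.1
  have key : ∀ r : ℝ, 0 < r → r < 1 → r ^ 2 * nsq (fun j => om n F j 0) ≤
      (K / 2 + Real.sqrt (1 + K ^ 2 / 4 +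
      (n * K ^ 2 + n * (8 / 3 * K)) / ((n : ℝ) - 1))) ^ 2 := by
    intro r hr0 hr1
    have hmem : ∀ z : Fin n → ℂ, nsq z ≤ 1 → (r : ℂ) • z ∈ eball n := by
      intro z hz
      rw [mem_eball_iff, nsq_smul, Complex.norm_real, Real.norm_eq_abs, sq_abs]
      have : r ^ 2 < 1 := by nlinarith
      nlinarith [nsq_nonneg z, sq_nonneg r]
    have := abstract_bound (S := fun i j k z => (r : ℂ) * oSchw n F i j k ((r : ℂ) • z))
      (o := fun j z => (r : ℂ) * om n F j ((r : ℂ) • z)) hn hK0 ?_ ?_ ?_ ?_ ?_ ?_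
    · refine le_trans (le_of_eq ?_) this
      have e : (fun j => (r : ℂ) * om n F j ((r : ℂ) • (0 : Fin n → ℂ))) =
          (r : ℂ) • fun j => om n F j 0 := by
        funext j; simp
      rw [e, nsq_smul, Complex.norm_real, Real.norm_eq_abs, sq_abs]
    · intro z hz i j k
      exact (pd_dil r (oSchw_diffAt hU hdF hJ (hmem z hz.le) i j k)).1
    · intro z hz v
      have h := memF_bound hα hF ((mem_eball_iff _).1 (hmem z hz.le)) v
      rw [← hK] at h
      have h2 := gm_dil hr0 hr1 hz h
      refine le_trans (le_of_eq ?_) h2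
      congr 1
      funext k
      simp only [Sop, Pi.smul_apply, smul_eq_mul, Finset.mul_sum]
      exact Finset.sum_congr rfl fun i _ => Finset.sum_congr rfl fun j _ => by ring
    · intro z hz i j k
      rw [oSchw_symm hU hdF hJ (hmem z hz.le)]
    · intro z hz i
      rw [← Finset.mul_sum]
      have := oSchw_trace hU hdF hJ (hmem z hz.le) i
      rw [Finset.sum_congr rfl fun k _ => oSchw_symm hU hdF hJ (hmem z hz.le) i k k, this, mul_zero]
    · intro z hz j
      exact (pd_dil r (om_diffAt hU hdF hJ (hmem z hz) j)).1
    · intro z hz i j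
      have hm := hmem z hz.le
      have hpS : ∀ i j k l, pd n l (fun z => (r : ℂ) * oSchw n F i j k ((r : ℂ) • z)) z = _ :=
        fun i j k l => (pd_dil r (oSchw_diffAt hU hdF hJ hm i j k)).2 l
      rw [(pd_dil r (om_diffAt hU hdF hJ hm j)).2 i, struct_eq hn hU hdF hJ hm]
      simp only [hpS]
      rw [← Finset.mul_sum]
      have e1 : ∑ k, (r : ℂ) * oSchw n F i j k ((r : ℂ) • z) * ((r : ℂ) * om n F k ((r : ℂ) • z)) =
          (r : ℂ) ^ 2 * ∑ k, oSchw n F i j k ((r : ℂ) • z) * om n F k ((r : ℂ) • z) := by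
        rw [Finset.mul_sum]
        exact Finset.sum_congr rfl fun k _ => by ring
      have e2 : ∑ k, ∑ m, (r : ℂ) * oSchw n F i m k ((r : ℂ) • z) *
          ((r : ℂ) * oSchw n F k j m ((r : ℂ) • z)) = (r : ℂ) ^ 2 *
          ∑ k, ∑ m, oSchw n F i m k ((r : ℂ) • z) * oSchw n F k j m ((r : ℂ) • z) := by
        simp only [Finset.mul_sum]
        exact Finset.sum_congr rfl fun k _ => Finset.sum_congr rfl fun m _ => by ring
      rw [e1, e2]
      ring
  have hlim : Filter.Tendsto (fun r : ℝ => r ^ 2 * nsq (fun j => om n F j 0))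
      (nhdsWithin 1 (Set.Iio 1)) (nhds (1 ^ 2 * nsq (fun j => om n F j 0))) := by
    refine Filter.Tendsto.mono_left ?_ nhdsWithin_le_nhds
    exact Continuous.tendsto (by fun_prop) 1
  rw [one_pow, one_mul] at hlim
  refine le_of_tendsto hlim ?_
  filter_upwards [self_mem_nhdsWithin,
    mem_nhdsWithin_of_mem_nhds (lt_mem_nhds (show (0 : ℝ) < 1 by norm_num))] with r hr1 hr0
  exact key r hr0 hr1
end

theorem stmt_13 (n : ℕ) (hn : 2 ≤ n) (α : ℝ) (hα : 0 ≤ α)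
    (F : (Fin n → ℂ) → (Fin n → ℂ)) (hF : memF n α F)
    (w : Fin n → ℂ) (hw : euclNorm n w = 1) :
    (1 / 2) * ‖∑ i, ∑ j, pd2 n i j (fun z => F z j) 0 * w i‖ ≤
      (1 / 2) * ((n : ℝ) + 1) * ((1 / 2) * Real.sqrt ((n : ℝ) + 1) * α
        + Real.sqrt (1 + (1 / 4) * ((n : ℝ) + 1) * α ^ 2 +
          ((4 * (n : ℝ) ^ 2 + 2 * (n : ℝ) - 2 + ((n : ℝ) + 1) / ((n : ℝ) - 1)) * α ^ 2
            + (4 * Real.sqrt ((n : ℝ) + 1)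
              + 8 * Real.sqrt ((n : ℝ) + 1) / ((n : ℝ) - 1)) * α))) := by
  have hU := isOpen_eball n
  have h0 : (0 : Fin n → ℂ) ∈ eball n := by
    rw [mem_eball_iff, nsq_zero]; norm_num
  have hn2 : (2 : ℝ) ≤ n := by exact_mod_cast hn
  have hn1 : (0 : ℝ) < (n : ℝ) - 1 := by linarith
  have hn0 : (0 : ℝ) < (n : ℝ) + 1 := by linarith
  have hnc : (n : ℂ) + 1 ≠ 0 := by exact_mod_cast Nat.succ_ne_zero n
  have hsum : ∑ i, ∑ j, pd2 n i j (fun z => F z j) 0 * w i =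
      -((n : ℂ) + 1) * dt (fun j => om n F j 0) w := by
    rw [dt, Finset.mul_sum]
    refine Finset.sum_congr rfl fun i _ => ?_
    rw [← Finset.sum_mul]
    have : ∑ k, Gam n F k k i 0 = ∑ j, pd2 n i j (fun z => F z j) 0 := by
      refine Finset.sum_congr rfl fun k _ => ?_
      unfold Gam
      rw [hF.2.2.2.1, inv_one, Finset.sum_eq_single k]
      · rw [Matrix.one_apply_eq, mul_one, pd2_symm hU (comp_diff hU hF.1 k) k i h0]
      · intro l _ hl
        rw [Matrix.one_apply_ne (Ne.symm hl), mul_zero]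
      · intro h; exact absurd (Finset.mem_univ k) h
    rw [← this]
    unfold om
    field_simp
  set K := Real.sqrt ((n : ℝ) + 1) * α with hK
  have hK0 : 0 ≤ K := by positivity
  have hKsq : K ^ 2 = ((n : ℝ) + 1) * α ^ 2 := by rw [hK, mul_pow, Real.sq_sqrt hn0.le]
  have hob := om_bound hn hα hF hK
  set R := K / 2 + Real.sqrt (1 + K ^ 2 / 4 +
      (n * K ^ 2 + n * (8 / 3 * K)) / ((n : ℝ) - 1)) with hR
  have hR0 : 0 ≤ R := by positivity
  have hdt : ‖dt (fun j => om n F j 0) w‖ ≤ R := by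
    have hcs := cs (fun j => om n F j 0) (fun j => (starRingEnd ℂ) (w j))
    have e1 : ip (fun j => om n F j 0) (fun j => (starRingEnd ℂ) (w j)) = dt (fun j => om n F j 0) w := by
      simp [ip, dt]
    have e2 : nsq (fun j => (starRingEnd ℂ) (w j)) = 1 := by
      have : nsq (fun j => (starRingEnd ℂ) (w j)) = nsq w := by simp [nsq]
      rw [this, ← euclNorm_sq, hw, one_pow]
    rw [e1, e2, mul_one] at hcs
    exact abs_le_of_sq_le_sq' (hcs.trans hob) hR0 |>.2
  have hnn : ‖-((n : ℂ) + 1)‖ = (n : ℝ) + 1 := by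
    rw [norm_neg]
    have : ((n : ℂ) + 1) = (((n : ℝ) + 1 : ℝ) : ℂ) := by push_cast; rfl
    rw [this, Complex.norm_real, Real.norm_eq_abs, abs_of_pos hn0]
  rw [hsum, norm_mul, hnn, mul_assoc]
  have hRle : R ≤ (1 / 2) * Real.sqrt ((n : ℝ) + 1) * α
        + Real.sqrt (1 + (1 / 4) * ((n : ℝ) + 1) * α ^ 2 +
          ((4 * (n : ℝ) ^ 2 + 2 * (n : ℝ) - 2 + ((n : ℝ) + 1) / ((n : ℝ) - 1)) * α ^ 2
            + (4 * Real.sqrt ((n : ℝ) + 1)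
              + 8 * Real.sqrt ((n : ℝ) + 1) / ((n : ℝ) - 1)) * α)) := by
    rw [hR]
    refine add_le_add (le_of_eq (by rw [hK]; ring)) (Real.sqrt_le_sqrt ?_)
    have t1 : (n * K ^ 2 + n * (8 / 3 * K)) / ((n : ℝ) - 1) =
        (n + 1 + (n + 1) / ((n : ℝ) - 1)) * α ^ 2 + 8 / 3 * (n / ((n : ℝ) - 1)) * K := by
      rw [hKsq]; field_simp; ring
    have t2 : (4 * Real.sqrt ((n : ℝ) + 1) + 8 * Real.sqrt ((n : ℝ) + 1) / ((n : ℝ) - 1)) * α =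
        (4 * ((n + 1) / ((n : ℝ) - 1))) * K := by
      rw [hK]; field_simp; ring
    have t3 : 8 / 3 * (n / ((n : ℝ) - 1)) ≤ 4 * ((n + 1) / ((n : ℝ) - 1)) := by
      have a1 : 0 ≤ n / ((n : ℝ) - 1) := by positivity
      have a2 : 0 ≤ 1 / ((n : ℝ) - 1) := by positivity
      rw [add_div]; linarith
    have t4 := mul_le_mul_of_nonneg_right t3 hK0
    have t5 : (n : ℝ) + 1 ≤ 4 * (n : ℝ) ^ 2 + 2 * n - 2 := by nlinarith
    have t6 := mul_le_mul_of_nonneg_right t5 (sq_nonneg α)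
    rw [t1, t2, hKsq]
    linarith
  gcongr
  exact hdt.trans hRle

end
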